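/- For every even integer k ≥ 4, the limit as n → ∞ of S_k(n)^{1/π(n)} exists and equals 2^α, where α := ∑_{i=1}^∞ (1/i)·log₂(1 + 1/i); that is, S_k(n) = (2^α + o(1))^{π(n)}. -/

import Mathlib

open scoped Classical

/-- A finite set of naturals is multiplicative `k`-Sidon if it contains no `2k`
distinct elements `a₁, …, aₖ, b₁, …, bₖ` with `a₁⋯aₖ = b₁⋯bₖ`. -/
def MulKSidon (k : ℕ) (A : Finset ℕ) : Prop :=
  ¬ ∃ a b : Fin k → ℕ, (∀ i, a i ∈ A) ∧ (∀ i, b i ∈ A) ∧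
    Function.Injective (Sum.elim a b) ∧ (∏ i, a i) = (∏ i, b i)

/-- `Sk k n`: the number of multiplicative `k`-Sidon subsets of `{1, …, n}`. -/
noncomputable def Sk (k n : ℕ) : ℕ :=
  ((Finset.Icc 1 n).powerset.filter (fun A => MulKSidon k A)).card

/-- `α = ∑_{i=1}^∞ (1/i)·log₂(1 + 1/i)`. -/
noncomputable def alpha : ℝ :=
  ∑' i : ℕ, (1 / ((i : ℝ) + 1)) * Real.logb 2 (1 + 1 / ((i : ℝ) + 1))

/-!
Two disjoint violations of orders `j` and `m` concatenate to one of order `j + m`, so for even `k`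
a multiplicative `k`-Sidon set becomes multiplicative `2`-Sidon after deleting at most `2k`
elements. In a `2`-Sidon subset of `{1, …, n}` all but `O(n ^ (5 / 6))` elements are multiples of
distinct large primes: otherwise the factorizations `a = u * v` into factors of suitable sizes
produce a rectangle `(u v) (w v') = (u v') (w v)`. Conversely, any choice of at most one multiple
of each prime above `√n` is `k`-Sidon. Hence `S_k(n) = e ^ o(π(n)) * ∏_{p ≤ n} (⌊n / p⌋ + 1)`, and
the logarithm of the product is `∑_i π(n / i) * log (1 + 1 / i)`, which by the prime number theorem
and dominated convergence is asymptotic to `π(n) * ∑_i (1 / i) * log (1 + 1 / i)`.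

The prime number theorem is obtained from the continuity of `-ζ'/ζ(s) - 1/(s - 1)` on `re s ≥ 1` by
the Wiener–Ikehara theorem, smoothing with Fejér kernels.
-/

/-! ### Multiplicative Sidon sets -/

namespace MulKSidon

open Finset

variable {k m : ℕ} {A B : Finset ℕ}

theorem mono (hBA : B ⊆ A) (hA : MulKSidon k A) : MulKSidon k B := fun ⟨a, b, ha, hb, hab⟩ ↦
  hA ⟨a, b, fun i ↦ hBA (ha i), fun i ↦ hBA (hb i), hab⟩

theorem iff_forall_prod_ne : MulKSidon k A ↔
    ∀ X ⊆ A, ∀ Y ⊆ A, Disjoint X Y → #X = k → #Y = k → ∏ x ∈ X, x ≠ ∏ y ∈ Y, y := by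
  refine ⟨fun hA X hX Y hY hXY cX cY hprod ↦ ?_, ?_⟩
  · have prod_orderEmb (Z : Finset ℕ) (cZ : #Z = k) : ∏ i, Z.orderEmbOfFin cZ i = ∏ z ∈ Z, z := by
      conv_rhs => rw [← image_orderEmbOfFin_univ Z cZ]
      exact (prod_image (f := id) (Z.orderEmbOfFin cZ).injective.injOn).symm
    refine hA ⟨X.orderEmbOfFin cX, Y.orderEmbOfFin cY, fun i ↦ hX (orderEmbOfFin_mem ..),
      fun i ↦ hY (orderEmbOfFin_mem ..), ?_, by rw [prod_orderEmb, prod_orderEmb, hprod]⟩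
    exact (X.orderEmbOfFin cX).injective.sumElim (Y.orderEmbOfFin cY).injective fun i j hij ↦
      disjoint_left.1 hXY (X.orderEmbOfFin_mem cX i) (hij ▸ Y.orderEmbOfFin_mem cY j)
  · rintro hA ⟨a, b, ha, hb, hinj, hprod⟩
    obtain ⟨ainj, binj, hab⟩ := Sum.elim_injective.1 hinj
    refine hA (univ.image a) (by grind) (univ.image b) (by grind) ?_ ?_ ?_ ?_
    · simpa [disjoint_left] using fun i j ↦ (hab i j).symm
    · simp [card_image_of_injective _ ainj]
    · simp [card_image_of_injective _ binj]
    · simp [prod_image ainj.injOn, prod_image binj.injOn, hprod]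

/-- Two disjoint violations concatenate, so after removing one violation of order `m` no violation
of order `k` may remain. -/
theorem exists_sdiff_of_add (hA : MulKSidon (k + m) A) (hm : ¬ MulKSidon m A) :
    ∃ C ⊆ A, #C = 2 * m ∧ MulKSidon k (A \ C) := by
  simp only [iff_forall_prod_ne, not_forall, not_not] at hA hm ⊢
  obtain ⟨X, hX, Y, hY, hXY, cX, cY, hprod⟩ := hm
  refine ⟨X ∪ Y, union_subset hX hY, by rw [card_union_of_disjoint hXY]; omega, ?_⟩
  intro X' hX' Y' hY' hXY' cX' cY' hprod'
  have hX'X : Disjoint X' X := by grind [disjoint_left]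
  have hY'Y : Disjoint Y' Y := by grind [disjoint_left]
  refine hA (X' ∪ X) (by grind) (Y' ∪ Y) (by grind) (by grind [disjoint_left]) ?_ ?_ ?_
  · rw [card_union_of_disjoint hX'X, cX', cX]
  · rw [card_union_of_disjoint hY'Y, cY', cY]
  · rw [prod_union hX'X, prod_union hY'Y, hprod, hprod']

theorem exists_subset_of_mul {j : ℕ} (hA : MulKSidon (j * m) A) :
    ∃ B ⊆ A, MulKSidon m B ∧ #(A \ B) ≤ j * (2 * m) := by
  induction j generalizing A with
  | zero =>
    rw [zero_mul] at hA
    exact (hA ⟨Fin.elim0, Fin.elim0, by simp [Function.injective_of_subsingleton]⟩).elim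
  | succ j ih =>
    by_cases hm : MulKSidon m A
    · exact ⟨A, subset_rfl, hm, by simp⟩
    rw [Nat.succ_mul] at hA
    obtain ⟨C, -, cC, hC⟩ := hA.exists_sdiff_of_add hm
    obtain ⟨B, hB, hBm, cB⟩ := ih hC
    refine ⟨B, hB.trans sdiff_subset, hBm, ?_⟩
    calc #(A \ B) ≤ #(((A \ C) \ B) ∪ C) := card_le_card (by grind)
      _ ≤ #((A \ C) \ B) + #C := card_union_le _ _
      _ ≤ (j + 1) * (2 * m) := by rw [cC, Nat.succ_mul j]; exact Nat.add_le_add_right cB _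

theorem mul_ne_mul (hB : MulKSidon 2 B) {x y z w : ℕ} (hx : x ∈ B) (hy : y ∈ B) (hz : z ∈ B)
    (hw : w ∈ B) (hxy : x ≠ y) (hzw : z ≠ w) (hxz : x ≠ z) (hxw : x ≠ w) (hyz : y ≠ z)
    (hyw : y ≠ w) : x * y ≠ z * w := by
  have := iff_forall_prod_ne.1 hB {x, y} (by grind) {z, w} (by grind) (by grind [disjoint_left])
    (card_pair hxy) (card_pair hzw)
  rwa [prod_pair hxy, prod_pair hzw] at this

end MulKSidon

section Fibers

open Finset

variable {α β : Type*} [DecidableEq β]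

/-- The ordered pairs of distinct elements of `B` in the same fiber of `u`. If `B` is a set of
products `u a * v a`, these are the pairs of edges that meet on the left in the bipartite graph with
edges `(u a, v a)`. -/
def fiberPairs (B : Finset α) (u : α → β) : Finset (α × α) :=
  {q ∈ B.offDiag | u q.1 = u q.2}

theorem mem_fiberPairs {B : Finset α} {u : α → β} {a a' : α} :
    (a, a') ∈ fiberPairs B u ↔ (a ∈ B ∧ a' ∈ B ∧ a ≠ a') ∧ u a = u a' := by
  simp [fiberPairs]

theorem exists_transversal [DecidableEq α] (B : Finset α) (u : α → β) :
    ∃ T ⊆ B, Set.InjOn u T ∧ #(B \ T) ≤ #(fiberPairs B u) := by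
  obtain ⟨T, hTB, hinj, himage⟩ :=
    (B.image u).exists_subset_injOn_image_eq_of_surjOn (f := u) B (by simp [Set.SurjOn])
  have exists_rep (a : α) (ha : a ∈ B \ T) : ∃ t ∈ T, u t = u a :=
    mem_image.1 (himage ▸ mem_image_of_mem u (mem_sdiff.1 ha).1)
  choose! rep rep_mem u_rep using exists_rep
  refine ⟨T, hTB, hinj, card_le_card_of_injOn (fun a ↦ (a, rep a)) (fun a ha ↦ ?_)
    fun a _ a' _ h ↦ congrArg Prod.fst h⟩
  obtain ⟨haB, haT⟩ := mem_sdiff.1 ha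
  have hrep := rep_mem a ha
  exact mem_fiberPairs.2 ⟨⟨haB, hTB hrep, fun h ↦ haT (h ▸ hrep)⟩, (u_rep a ha).symm⟩

theorem card_fiberPairs (B : Finset α) {u : α → β} {U : Finset β} (hu : Set.MapsTo u B U) :
    #(fiberPairs B u) = ∑ w ∈ U, #({a ∈ B | u a = w}.offDiag) := by
  rw [card_eq_sum_card_fiberwise (f := fun q ↦ u q.1) (t := U)]
  · refine sum_congr rfl fun w _ ↦ congrArg card ?_
    ext ⟨a, a'⟩
    simp only [mem_filter, mem_fiberPairs, mem_offDiag]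
    grind
  · rintro ⟨a, a'⟩ h
    exact hu (mem_fiberPairs.1 h).1.1

/-- Fibers with at most `s` elements contribute `s ^ 2` each, larger ones are paid for by their
pairs. -/
theorem mul_card_le_add_card_fiberPairs (s : ℕ) (B : Finset α) {u : α → β} {U : Finset β}
    (hu : Set.MapsTo u B U) : s * #B ≤ #U * s ^ 2 + #(fiberPairs B u) := by
  have fiber_bound (d : ℕ) : s * d ≤ s ^ 2 + (d * d - d) := by
    rcases le_or_gt d s with h | h
    · nlinarith
    · have : (s + 1) * d ≤ d * d := by gcongr; omega
      grind
  calc s * #B = ∑ w ∈ U, s * #{a ∈ B | u a = w} := by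
        rw [card_eq_sum_card_fiberwise hu, mul_sum]
    _ ≤ ∑ w ∈ U, (s ^ 2 + #({a ∈ B | u a = w}.offDiag)) :=
        sum_le_sum fun w _ ↦ by rw [offDiag_card]; exact fiber_bound _
    _ = #U * s ^ 2 + #(fiberPairs B u) := by
        rw [sum_add_distrib, sum_const, smul_eq_mul, card_fiberPairs B hu]

theorem card_filter_powerset_card_le (S : Finset α) (r : ℕ) :
    #{D ∈ S.powerset | #D ≤ r} ≤ (#S + 1) ^ r := by
  calc #{D ∈ S.powerset | #D ≤ r} = ∑ i ∈ range (r + 1), (#S).choose i := by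
        rw [card_eq_sum_card_fiberwise (f := card) (t := range (r + 1)) fun D hD ↦ by simp_all]
        refine sum_congr rfl fun i hi ↦ ?_
        rw [← card_powersetCard, powersetCard_eq_filter, filter_filter]
        exact congrArg card (filter_congr fun D _ ↦ by grind)
    _ ≤ ∑ i ∈ range (r + 1), #S ^ i * 1 ^ (r - i) * r.choose i := by
        refine sum_le_sum fun i hi ↦ ?_
        rw [one_pow, mul_one]
        exact (Nat.choose_le_pow _ _).trans
          (Nat.le_mul_of_pos_right _ (Nat.choose_pos (mem_range_succ_iff.1 hi)))
    _ = (#S + 1) ^ r := (add_pow _ _ _).symm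

end Fibers

section Factorization

theorem exists_dvd_prime_or_le_sq {a t : ℕ} (ht : 0 < t) (hta : t ≤ a) :
    ∃ d, d ∣ a ∧ t ≤ d ∧ (d.Prime ∨ d ≤ t ^ 2) := by
  have hex : ∃ d, d ∣ a ∧ t ≤ d := ⟨a, dvd_rfl, hta⟩
  obtain ⟨d, ⟨hda, htd⟩, hmin⟩ : ∃ d, (d ∣ a ∧ t ≤ d) ∧ ∀ c < d, c ∣ a → c < t :=
    ⟨Nat.find hex, Nat.find_spec hex, fun c hc hca ↦ not_le.1 fun h ↦ Nat.find_min hex hc ⟨hca, h⟩⟩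
  refine ⟨d, hda, htd, or_iff_not_imp_left.2 fun hd ↦ ?_⟩
  rcases (Nat.one_le_of_lt (ht.trans_le htd)).eq_or_lt' with rfl | hd1
  · exact Nat.one_le_pow _ _ ht
  obtain ⟨p, q, hpd, hqd, rfl⟩ := (Nat.not_prime_iff_exists_mul_eq hd1).1 hd
  calc p * q ≤ t * t := Nat.mul_le_mul (hmin p hpd ((dvd_mul_right p q).trans hda)).le
        (hmin q hqd ((dvd_mul_left q p).trans hda)).le
    _ = t ^ 2 := (sq t).symm

theorem exists_mul_eq_le_sq_of_lt_cube {a t : ℕ} (hat : a < t ^ 3)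
    (hprime : ∀ p, p.Prime → p ∣ a → p ≤ t ^ 2) : ∃ d e, d * e = a ∧ d ≤ t ^ 2 ∧ e ≤ t ^ 2 := by
  have ht : 0 < t := Nat.pos_of_ne_zero (by rintro rfl; simp at hat)
  rcases lt_or_ge a t with h | h
  · exact ⟨a, 1, mul_one a, h.le.trans (Nat.le_self_pow two_ne_zero t), Nat.one_le_pow _ _ ht⟩
  obtain ⟨d, ⟨e, rfl⟩, htd, hd⟩ := exists_dvd_prime_or_le_sq ht h
  refine ⟨d, e, rfl, hd.elim (fun hp ↦ hprime d hp (dvd_mul_right d e)) id, ?_⟩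
  by_contra! he
  have : t * t ^ 2 ≤ d * e := Nat.mul_le_mul htd he.le
  grind

theorem exists_mul_eq_le_pow_of_lt {a s : ℕ} (has : a < s ^ 6)
    (hprime : ∀ p, p.Prime → p ∣ a → p ≤ s ^ 4) : ∃ u v, u * v = a ∧ u ≤ s ^ 4 ∧ v ≤ s ^ 3 := by
  obtain ⟨d, e, rfl, hd, he⟩ := exists_mul_eq_le_sq_of_lt_cube (a := a) (t := s ^ 2)
    (by rwa [← pow_mul]) (by simpa only [← pow_mul] using hprime)
  rw [← pow_mul] at hd he
  by_cases he3 : e ≤ s ^ 3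
  · exact ⟨d, e, rfl, hd, he3⟩
  · refine ⟨e, d, mul_comm e d, he, ?_⟩
    by_contra! hd3
    have : s ^ 3 * s ^ 3 ≤ d * e := Nat.mul_le_mul hd3.le (not_le.1 he3).le
    grind

end Factorization

/-! ### Selecting multiples of large primes -/

section SelectedMultiples

open Finset

variable {k n s : ℕ} {P : Finset ℕ}

/-- The set `{p * g p : p ∈ P}`, where `g p = 0` encodes that no multiple of `p` is selected. For
`g` ranging over `P.pi fun p ↦ range (n / p + 1)` these are the subsets of `{1, …, n}` obtained by
picking at most one multiple of each `p ∈ P`. -/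
noncomputable def selectedMultiples (P : Finset ℕ) (g : (p : ℕ) → p ∈ P → ℕ) : Finset ℕ :=
  (P.attach.image fun p ↦ p.1 * g p.1 p.2).erase 0

theorem mem_selectedMultiples {g : (p : ℕ) → p ∈ P → ℕ} {a : ℕ} :
    a ∈ selectedMultiples P g ↔ a ≠ 0 ∧ ∃ p, ∃ hp : p ∈ P, p * g p hp = a := by
  simp [selectedMultiples]

theorem exists_selectedMultiples_eq {T : Finset ℕ} (hT : T ⊆ Icc 1 n) {u : ℕ → ℕ}
    (hu : Set.MapsTo u T P) (hinj : Set.InjOn u T) (hdvd : ∀ a ∈ T, u a ∣ a) :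
    ∃ g ∈ P.pi fun p ↦ range (n / p + 1), selectedMultiples P g = T := by
  have exists_cofactor (p : ℕ) : ∃ i ≤ n / p, (∀ a ∈ T, u a = p → p * i = a) ∧
      (i ≠ 0 → p * i ∈ T) := by
    by_cases h : ∃ a ∈ T, u a = p
    · obtain ⟨a, ha, rfl⟩ := h
      have mul_div := Nat.mul_div_cancel' (hdvd a ha)
      exact ⟨a / u a, Nat.div_le_div_right (mem_Icc.1 (hT ha)).2,
        fun b hb hba ↦ by rw [mul_div, hinj hb ha hba], fun _ ↦ by rwa [mul_div]⟩
    · exact ⟨0, Nat.zero_le _, fun a ha hap ↦ (h ⟨a, ha, hap⟩).elim, fun h ↦ (h rfl).elim⟩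
  choose g g_le mul_g mem_of_ne using exists_cofactor
  refine ⟨fun p _ ↦ g p, mem_pi.2 fun p _ ↦ mem_range_succ_iff.2 (g_le p), ?_⟩
  ext a
  rw [mem_selectedMultiples]
  constructor
  · rintro ⟨ha, p, -, rfl⟩
    exact mem_of_ne p (right_ne_zero_of_mul ha)
  · intro ha
    exact ⟨Nat.one_le_iff_ne_zero.1 (mem_Icc.1 (hT ha)).1, u a, hu ha, mul_g _ a ha rfl⟩

namespace MulKSidon

variable {A B : Finset ℕ}

/-- Two pairs `(u * v, u * v')` and `(w * v, w * v')` with `u ≠ w` would give the forbidden relation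
`(u * v) * (w * v') = (u * v') * (w * v)`. -/
theorem card_fiberPairs_le (hB : MulKSidon 2 B) {u v : ℕ → ℕ} {V : Finset ℕ}
    (huv : ∀ a ∈ B, u a * v a = a) (hv : Set.MapsTo v B V) : #(fiberPairs B u) ≤ #V ^ 2 := by
  rw [sq, ← card_product]
  refine card_le_card_of_injOn (fun q ↦ (v q.1, v q.2)) ?_ ?_
  · rintro ⟨a, a'⟩ h
    obtain ⟨⟨ha, ha', -⟩, -⟩ := mem_fiberPairs.1 h
    exact mem_product.2 ⟨hv ha, hv ha'⟩
  · rintro ⟨a, a'⟩ h ⟨b, b'⟩ h' hvv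
    obtain ⟨⟨ha, ha', haa'⟩, hua⟩ := mem_fiberPairs.1 h
    obtain ⟨⟨hb, hb', hbb'⟩, hub⟩ := mem_fiberPairs.1 h'
    obtain ⟨hvab, hvab'⟩ := Prod.mk.inj hvv
    have hua_eq : u a = u b := by
      by_contra hne
      refine hB.mul_ne_mul ha hb' ha' hb (by grind) (by grind) haa' (by grind) (by grind)
        hbb'.symm ?_
      calc a * b' = (u a * v a) * (u b' * v b') := by rw [huv a ha, huv b' hb']
        _ = (u a' * v a') * (u b * v b) := by rw [hvab, ← hvab', ← hua, ← hub]; ring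
        _ = a' * b := by rw [huv a' ha', huv b hb]
    exact Prod.ext (by rw [← huv a ha, ← huv b hb, hua_eq, hvab])
      (by rw [← huv a' ha', ← huv b' hb', ← hua, ← hub, hua_eq, hvab'])

theorem card_le_of_forall_prime_le (hB : MulKSidon 2 B) (hBs : ∀ a ∈ B, 0 < a ∧ a < s ^ 6)
    (hprime : ∀ a ∈ B, ∀ p, p.Prime → p ∣ a → p ≤ s ^ 4) : #B ≤ 2 * s ^ 5 := by
  choose! u v huv hu hv using fun a ha ↦ exists_mul_eq_le_pow_of_lt (hBs a ha).2 (hprime a ha)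
  have pos (a : ℕ) (ha : a ∈ B) : 0 < u a * v a := (huv a ha).symm ▸ (hBs a ha).1
  have hu_maps : Set.MapsTo u B (Icc 1 (s ^ 4)) := fun a ha ↦
    mem_Icc.2 ⟨pos_of_mul_pos_left (pos a ha) (Nat.zero_le _), hu a ha⟩
  have hv_maps : Set.MapsTo v B (Icc 1 (s ^ 3)) := fun a ha ↦
    mem_Icc.2 ⟨pos_of_mul_pos_right (pos a ha) (Nat.zero_le _), hv a ha⟩
  have hmul : s * #B ≤ s * (2 * s ^ 5) := by
    calc s * #B ≤ #(Icc 1 (s ^ 4)) * s ^ 2 + #(fiberPairs B u) :=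
          mul_card_le_add_card_fiberPairs s B hu_maps
      _ ≤ #(Icc 1 (s ^ 4)) * s ^ 2 + #(Icc 1 (s ^ 3)) ^ 2 := by
          gcongr
          exact hB.card_fiberPairs_le huv hv_maps
      _ = s * (2 * s ^ 5) := by simp only [Nat.card_Icc, Nat.add_sub_cancel]; ring
  rcases s.eq_zero_or_pos with rfl | hs
  · simpa [eq_empty_iff_forall_notMem] using hBs
  · exact Nat.le_of_mul_le_mul_left hmul hs

theorem exists_selectedMultiples_of_forall_exists_dvd (hB : MulKSidon 2 B) (hBn : B ⊆ Icc 1 n)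
    (hn : n < s ^ 6) (hP : ∀ p ∈ P, s ^ 4 < p) (hdvd : ∀ a ∈ B, ∃ p ∈ P, p ∣ a) :
    ∃ g ∈ P.pi fun p ↦ range (n / p + 1),
      selectedMultiples P g ⊆ B ∧ #(B \ selectedMultiples P g) ≤ s ^ 4 := by
  choose! u hu hua using hdvd
  have cofactor_maps : Set.MapsTo (fun a ↦ a / u a) B (Icc 1 (s ^ 2)) := fun a ha ↦ by
    obtain ⟨ha1, han⟩ := mem_Icc.1 (hBn ha)
    refine mem_Icc.2 ⟨Nat.div_pos (Nat.le_of_dvd ha1 (hua a ha)) ((Nat.zero_le _).trans_lt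
      (hP _ (hu a ha))), Nat.div_le_of_le_mul ?_⟩
    calc a ≤ s ^ 4 * s ^ 2 := by grind
      _ ≤ u a * s ^ 2 := Nat.mul_le_mul_right _ (hP _ (hu a ha)).le
  obtain ⟨T, hTB, hinj, cT⟩ := exists_transversal B u
  obtain ⟨g, hg, rfl⟩ := exists_selectedMultiples_eq (P := P) (hTB.trans hBn)
    (fun a ha ↦ hu a (hTB ha)) hinj fun a ha ↦ hua a (hTB ha)
  refine ⟨g, hg, hTB, ?_⟩
  calc #(B \ selectedMultiples P g) ≤ #(fiberPairs B u) := cT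
    _ ≤ #(Icc 1 (s ^ 2)) ^ 2 :=
        hB.card_fiberPairs_le (fun a ha ↦ Nat.mul_div_cancel' (hua a ha)) cofactor_maps
    _ = s ^ 4 := by simp only [Nat.card_Icc, Nat.add_sub_cancel]; ring

theorem exists_selectedMultiples_of_even (hk : Even k) (hA : MulKSidon k A) (hAn : A ⊆ Icc 1 n)
    (hn : n < s ^ 6) :
    ∃ g ∈ pi {p ∈ n.primesLE | s ^ 4 < p} fun p ↦ range (n / p + 1), selectedMultiples _ g ⊆ A ∧
      #(A \ selectedMultiples _ g) ≤ 2 * k + s ^ 4 + 2 * s ^ 5 := by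
  set P := {p ∈ n.primesLE | s ^ 4 < p}
  obtain ⟨j, rfl⟩ := hk.two_dvd
  rw [mul_comm] at hA
  obtain ⟨B, hBA, hB, cB⟩ := hA.exists_subset_of_mul
  have hBn := hBA.trans hAn
  set L := {a ∈ B | ∃ p ∈ P, p ∣ a}
  have hLB : L ⊆ B := filter_subset _ _
  obtain ⟨g, hg, hgL, cL⟩ :=
    (hB.mono hLB).exists_selectedMultiples_of_forall_exists_dvd (hLB.trans hBn) hn
      (fun p (hp : p ∈ P) ↦ (mem_filter.1 hp).2) fun a ha ↦ (mem_filter.1 ha).2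
  have smooth_prime_le (a : ℕ) (ha : a ∈ B \ L) (p : ℕ) (hp : p.Prime) (hpa : p ∣ a) :
      p ≤ s ^ 4 := by
    obtain ⟨haB, haL⟩ := mem_sdiff.1 ha
    obtain ⟨ha1, han⟩ := mem_Icc.1 (hBn haB)
    by_contra! hlt
    exact haL (mem_filter.2 ⟨haB, p, mem_filter.2
      ⟨Nat.mem_primesLE.2 ⟨(Nat.le_of_dvd ha1 hpa).trans han, hp⟩, hlt⟩, hpa⟩)
  have cS : #(B \ L) ≤ 2 * s ^ 5 := (hB.mono sdiff_subset).card_le_of_forall_prime_le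
    (fun a ha ↦ by grind) smooth_prime_le
  refine ⟨g, hg, hgL.trans (hLB.trans hBA), ?_⟩
  calc #(A \ selectedMultiples P g) ≤ #((A \ B) ∪ (L \ selectedMultiples P g) ∪ (B \ L)) :=
        card_le_card (by grind)
    _ ≤ #(A \ B) + #(L \ selectedMultiples P g) + #(B \ L) :=
        (card_union_le _ _).trans (Nat.add_le_add_right (card_union_le _ _) _)
    _ ≤ 2 * (2 * j) + s ^ 4 + 2 * s ^ 5 := by omega

end MulKSidon

/-- The number of ways to pick, for each prime `p ≤ n`, at most one of its multiples in
`{1, …, n}`: the main term of `Sk k n` for even `k`. -/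
def primeQuotientProd (n : ℕ) : ℕ := ∏ p ∈ n.primesLE, (n / p + 1)

theorem primeQuotientProd_pos (n : ℕ) : 0 < primeQuotientProd n :=
  prod_pos fun _ _ ↦ Nat.succ_pos _

theorem Sk_le_of_even (hk : Even k) (hn : n < s ^ 6) :
    Sk k n ≤ primeQuotientProd n * (n + 1) ^ (2 * k + s ^ 4 + 2 * s ^ 5) := by
  set P := {p ∈ n.primesLE | s ^ 4 < p}
  set r := 2 * k + s ^ 4 + 2 * s ^ 5
  set choices := P.pi fun p ↦ range (n / p + 1)
  set small := {D ∈ (Icc 1 n).powerset | #D ≤ r}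
  have hsub : (Icc 1 n).powerset.filter (fun A ↦ MulKSidon k A) ⊆
      image₂ (fun g D ↦ selectedMultiples P g ∪ D) choices small := fun A hA ↦ by
    obtain ⟨hAn, hA⟩ := mem_filter.1 hA
    rw [mem_powerset] at hAn
    obtain ⟨g, hg, hgA, card_le⟩ := hA.exists_selectedMultiples_of_even hk hAn hn
    exact mem_image₂.2 ⟨g, hg, A \ selectedMultiples P g,
      mem_filter.2 ⟨mem_powerset.2 (sdiff_subset.trans hAn), card_le⟩, union_sdiff_of_subset hgA⟩
  calc Sk k n ≤ #choices * #small := (card_le_card hsub).trans (card_image₂_le _ _ _)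
    _ = (∏ p ∈ P, (n / p + 1)) * #small := by simp only [choices, card_pi, card_range]
    _ ≤ primeQuotientProd n * (n + 1) ^ r := by
        refine Nat.mul_le_mul (prod_le_prod_of_subset_of_one_le' (filter_subset _ _)
          fun _ _ _ ↦ Nat.le_add_left _ _) ?_
        simpa using card_filter_powerset_card_le (Icc 1 n) r

section LowerBound

variable {g g' : (p : ℕ) → p ∈ P → ℕ}

theorem mul_le_of_mem_pi (hg : g ∈ P.pi fun p ↦ range (n / p + 1)) {p : ℕ} (hp : p ∈ P) :
    p * g p hp ≤ n :=
  (Nat.mul_le_mul_left p (mem_range_succ_iff.1 (mem_pi.1 hg p hp))).trans (Nat.mul_div_le n p)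

theorem eq_of_prime_dvd_mul (hP : ∀ p ∈ P, p.Prime ∧ n < p * p)
    (hg : g ∈ P.pi fun p ↦ range (n / p + 1)) {p q : ℕ} (hp : p ∈ P) (hq : q ∈ P)
    (hne : q * g q hq ≠ 0) (hdvd : p ∣ q * g q hq) : p = q := by
  obtain ⟨pp, hpn⟩ := hP p hp
  obtain ⟨pq, hqn⟩ := hP q hq
  refine (pp.dvd_mul.1 hdvd).elim (Nat.prime_dvd_prime_iff_eq pp pq).1 fun hpg ↦ ?_
  have hpg_le : p ≤ g q hq := Nat.le_of_dvd (Nat.pos_of_ne_zero (right_ne_zero_of_mul hne)) hpg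
  have hqp : q * p ≤ n := (Nat.mul_le_mul_left q hpg_le).trans (mul_le_of_mem_pi hg hq)
  nlinarith

theorem mulKSidon_selectedMultiples (hk : 0 < k) (hP : ∀ p ∈ P, p.Prime ∧ n < p * p)
    (hg : g ∈ P.pi fun p ↦ range (n / p + 1)) : MulKSidon k (selectedMultiples P g) := by
  rintro ⟨a, b, ha, hb, hinj, hprod⟩
  obtain ⟨-, p, hp, hpa⟩ := mem_selectedMultiples.1 (ha ⟨0, hk⟩)
  have hp_dvd : p ∣ ∏ i, b i :=
    hprod ▸ (Dvd.intro _ hpa).trans (dvd_prod_of_mem _ (mem_univ _))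
  obtain ⟨j, -, hpb⟩ := (hP p hp).1.prime.exists_mem_finset_dvd hp_dvd
  obtain ⟨hb0, q, hq, hqb⟩ := mem_selectedMultiples.1 (hb j)
  obtain rfl : p = q := eq_of_prime_dvd_mul hP hg hp hq (hqb ▸ hb0) (hqb ▸ hpb)
  exact Sum.inl_ne_inr (hinj (a₁ := .inl ⟨0, hk⟩) (a₂ := .inr j) (hpa.symm.trans hqb))

theorem eq_of_selectedMultiples_subset (hP : ∀ p ∈ P, p.Prime ∧ n < p * p)
    (hg' : g' ∈ P.pi fun p ↦ range (n / p + 1))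
    (hsub : selectedMultiples P g ⊆ selectedMultiples P g') {p : ℕ} (hp : p ∈ P)
    (hne : g p hp ≠ 0) : g p hp = g' p hp := by
  have hp0 := (hP p hp).1.pos
  obtain ⟨hne', q, hq, hqp⟩ := mem_selectedMultiples.1 <| hsub <|
    mem_selectedMultiples.2 ⟨mul_ne_zero hp0.ne' hne, p, hp, rfl⟩
  obtain rfl : p = q := eq_of_prime_dvd_mul hP hg' hp hq (hqp ▸ hne') (hqp ▸ dvd_mul_right _ _)
  exact (Nat.eq_of_mul_eq_mul_left hp0 hqp).symm

theorem selectedMultiples_injOn (hP : ∀ p ∈ P, p.Prime ∧ n < p * p) :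
    Set.InjOn (selectedMultiples P) (P.pi fun p ↦ range (n / p + 1)) := by
  intro g hg g' hg' h
  funext p hp
  by_cases hgp : g p hp = 0
  · by_contra hne
    exact hne (eq_of_selectedMultiples_subset hP hg h.ge hp fun h' ↦ hne (hgp.trans h'.symm)).symm
  · exact eq_of_selectedMultiples_subset hP hg' h.le hp hgp

theorem prod_le_Sk (hk : 0 < k) (hP : ∀ p ∈ P, p.Prime ∧ n < p * p) :
    ∏ p ∈ P, (n / p + 1) ≤ Sk k n := by
  calc ∏ p ∈ P, (n / p + 1) = #(P.pi fun p ↦ range (n / p + 1)) := by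
        simp only [card_pi, card_range]
    _ ≤ Sk k n := card_le_card_of_injOn (selectedMultiples P) (fun g hg ↦ ?_)
        (selectedMultiples_injOn hP)
  refine mem_filter.2 ⟨mem_powerset.2 fun a ha ↦ ?_, mulKSidon_selectedMultiples hk hP hg⟩
  obtain ⟨ha0, p, hp, rfl⟩ := mem_selectedMultiples.1 ha
  exact mem_Icc.2 ⟨Nat.pos_of_ne_zero ha0, mul_le_of_mem_pi hg hp⟩

theorem Sk_pos (hk : 0 < k) (n : ℕ) : 0 < Sk k n :=
  prod_le_Sk (P := ∅) hk (by simp)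

theorem primeQuotientProd_le_Sk_mul (hk : 0 < k) (n : ℕ) :
    primeQuotientProd n ≤ Sk k n * (n + 1) ^ n.sqrt := by
  rw [primeQuotientProd, ← prod_filter_mul_prod_filter_not n.primesLE (fun p ↦ n < p * p)]
  refine Nat.mul_le_mul (prod_le_Sk hk fun p hp ↦ ?_) ?_
  · obtain ⟨hp, hpn⟩ := mem_filter.1 hp
    exact ⟨(Nat.mem_primesLE.1 hp).2, hpn⟩
  have card_le : #{p ∈ n.primesLE | ¬n < p * p} ≤ n.sqrt := by
    rw [show n.sqrt = #(Icc 1 n.sqrt) by simp]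
    refine card_le_card fun p hp ↦ ?_
    obtain ⟨hp, hpn⟩ := mem_filter.1 hp
    exact mem_Icc.2 ⟨(Nat.mem_primesLE.1 hp).2.pos, Nat.le_sqrt.2 (not_lt.1 hpn)⟩
  calc ∏ p ∈ n.primesLE with ¬n < p * p, (n / p + 1)
    _ ≤ (n + 1) ^ #{p ∈ n.primesLE | ¬n < p * p} :=
        prod_le_pow_card _ _ _ fun p _ ↦ Nat.succ_le_succ (Nat.div_le_self n p)
    _ ≤ (n + 1) ^ n.sqrt := Nat.pow_le_pow_right n.succ_pos card_le

end LowerBound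

end SelectedMultiples

/-! ### The Wiener–Ikehara theorem -/

section FejerKernel

open MeasureTheory Complex

/-- The Fejér kernel `(sin (v / 2) / (v / 2)) ^ 2` of the real line, up to its (irrelevant) value
`0` at `v = 0`. It is the Fourier transform of the triangle `1 - |t|` on `[-1, 1]`. -/
noncomputable def fejerKernel (v : ℝ) : ℝ := 2 * (1 - Real.cos v) / v ^ 2

theorem fejerKernel_nonneg (v : ℝ) : 0 ≤ fejerKernel v :=
  div_nonneg (by linarith [Real.cos_le_one v]) (sq_nonneg v)

@[fun_prop]
theorem measurable_fejerKernel : Measurable fejerKernel := by unfold fejerKernel; fun_prop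

theorem fejerKernel_le (v : ℝ) : fejerKernel v ≤ 5 * (1 + v ^ 2)⁻¹ := by
  rcases eq_or_ne v 0 with rfl | hv
  · simp [fejerKernel]
  have hv2 : 0 < v ^ 2 := by positivity
  rw [fejerKernel, ← div_eq_mul_inv, div_le_div_iff₀ hv2 (by positivity)]
  nlinarith [Real.one_sub_sq_div_two_le_cos (x := v), Real.neg_one_le_cos v, Real.cos_le_one v]

theorem integrable_fejerKernel : Integrable fejerKernel := by
  refine (integrable_inv_one_add_sq.const_mul 5).mono' (by fun_prop) (.of_forall fun v ↦ ?_)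
  rw [Real.norm_of_nonneg (fejerKernel_nonneg v)]
  exact fejerKernel_le v

theorem integral_fejerKernel_pos : 0 < ∫ v, fejerKernel v := by
  have pos_on (v : ℝ) (hv : v ∈ Set.Ioo 1 2) : 0 < fejerKernel v := by
    have hcos : Real.cos v < Real.cos 0 := Real.cos_lt_cos_of_nonneg_of_le_pi le_rfl
      (by linarith [hv.2, Real.pi_gt_three]) (by linarith [hv.1])
    rw [Real.cos_zero] at hcos
    have : 0 < v := by linarith [hv.1]
    exact div_pos (by linarith) (by positivity)
  calc 0 < ∫ v in (1 : ℝ)..2, fejerKernel v :=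
        intervalIntegral.intervalIntegral_pos_of_pos_on integrable_fejerKernel.intervalIntegrable
          pos_on one_lt_two
    _ = ∫ v in Set.Ioc 1 2, fejerKernel v := intervalIntegral.integral_of_le one_le_two
    _ ≤ ∫ v, fejerKernel v :=
        setIntegral_le_integral integrable_fejerKernel (.of_forall fejerKernel_nonneg)

/-- The integrand `(1 - |t|) e ^ (i t y)` of the Fourier integral of the triangle on `[-1, 1]`. -/
noncomputable def triangleWave (y t : ℝ) : ℂ := ((1 - |t| : ℝ) : ℂ) * cexp (I * t * y)

@[fun_prop]
theorem continuous_triangleWave (y : ℝ) : Continuous (triangleWave y) := by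
  unfold triangleWave; fun_prop

theorem norm_triangleWave_le_one (y : ℝ) {t : ℝ} (ht : t ∈ Set.Icc (-1) 1) :
    ‖triangleWave y t‖ ≤ 1 := by
  have htri : abs (1 - |t|) ≤ 1 := by
    rw [abs_le]; constructor <;> linarith [abs_nonneg t, abs_le.2 ht]
  rw [triangleWave, show I * t * y = ((t * y : ℝ) : ℂ) * I by push_cast; ring, norm_mul,
    norm_exp_ofReal_mul_I, mul_one, norm_real]
  exact htri

theorem integral_one_sub_mul_cos {v : ℝ} (hv : v ≠ 0) :
    ∫ t in (0 : ℝ)..1, 2 * (1 - t) * Real.cos (t * v) = fejerKernel v := by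
  have hderiv (t : ℝ) : HasDerivAt
      (fun t ↦ 2 * (1 - t) * Real.sin (t * v) / v - 2 * Real.cos (t * v) / v ^ 2)
      (2 * (1 - t) * Real.cos (t * v)) t := by
    have hmul : HasDerivAt (fun t : ℝ ↦ t * v) v t := hasDerivAt_mul_const v
    refine ((((((hasDerivAt_id t).const_sub 1).const_mul 2).mul hmul.sin).div_const v).sub
      ((hmul.cos.const_mul 2).div_const (v ^ 2))).congr_deriv ?_
    simp only [id]
    field_simp
    ring
  rw [intervalIntegral.integral_eq_sub_of_hasDerivAt (fun t _ ↦ hderiv t)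
    (Continuous.intervalIntegrable (by fun_prop) _ _), fejerKernel]
  simp only [sub_self, mul_zero, one_mul, zero_mul, zero_div, zero_sub, sub_zero, mul_one,
    Real.sin_zero, Real.cos_zero, sub_neg_eq_add]
  ring

theorem integral_triangleWave {v : ℝ} (hv : v ≠ 0) :
    ∫ t in Set.Ioc (-1 : ℝ) 1, triangleWave v t = fejerKernel v := by
  have hfi (a b : ℝ) : IntervalIntegrable (triangleWave v) volume a b :=
    (continuous_triangleWave v).intervalIntegrable a b
  have hneg : ∫ t in (-1 : ℝ)..0, triangleWave v t = ∫ t in (0 : ℝ)..1, triangleWave v (-t) := by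
    simp
  have hsum (t : ℝ) (ht : t ∈ Set.uIcc 0 1) : triangleWave v (-t) + triangleWave v t =
      ((2 * (1 - t) * Real.cos (t * v) : ℝ) : ℂ) := by
    rw [Set.uIcc_of_le zero_le_one] at ht
    rw [triangleWave, triangleWave, abs_neg, abs_of_nonneg ht.1]
    push_cast
    rw [Complex.cos]
    ring_nf
  rw [← intervalIntegral.integral_of_le (by norm_num),
    ← intervalIntegral.integral_add_adjacent_intervals (hfi (-1) 0) (hfi 0 1), hneg,
    ← intervalIntegral.integral_add
      ((by fun_prop : Continuous fun t ↦ triangleWave v (-t)).intervalIntegrable _ _) (hfi 0 1),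
    intervalIntegral.integral_congr hsum, intervalIntegral.integral_ofReal,
    integral_one_sub_mul_cos hv]

end FejerKernel

section LaplaceExtension

open MeasureTheory Filter Topology Complex

theorem integral_comp_sub_div_mul (h K : ℝ → ℝ) {l : ℝ} (hl : 0 < l) (x : ℝ) :
    ∫ v, h (x - v / l) * K v = l * ∫ u, h u * K (l * (x - u)) := by
  have hscale := Measure.integral_comp_mul_left (fun v ↦ h (x - v / l) * K v) l
  rw [abs_of_pos (inv_pos.2 hl), smul_eq_mul] at hscale
  rw [← integral_sub_left_eq_self (fun u ↦ h u * K (l * (x - u))) volume x]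
  simp only [sub_sub_cancel]
  simp only [mul_div_cancel_left₀ _ hl.ne'] at hscale
  rw [hscale, mul_inv_cancel_left₀ (ne_of_gt hl)]

/-- A bounded measurable function `f` on the half-line `[0, ∞)`, extended by zero, whose Laplace
transform extends from the open right half-plane to a continuous function `G` on the closed one. -/
structure HasLaplaceExtension (f : ℝ → ℝ) (G : ℂ → ℂ) : Prop where
  measurable : Measurable f
  bounded : ∃ C, ∀ u, |f u| ≤ C
  eq_zero_of_neg : ∀ u < 0, f u = 0
  continuousOn : ContinuousOn G {s | 0 ≤ s.re}
  integral_eq : ∀ s : ℂ, 0 < s.re → ∫ u : ℝ, (f u : ℂ) * cexp (-s * u) = G s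

namespace HasLaplaceExtension

variable {f : ℝ → ℝ} {G : ℂ → ℂ} {l σ : ℝ}

theorem abs_mul_exp_le (h : HasLaplaceExtension f G) {C : ℝ} (hC : ∀ u, |f u| ≤ C) (hσ : 0 < σ)
    (u : ℝ) : |f u * Real.exp (-σ * u)| ≤ C := by
  rcases lt_or_ge u 0 with hu | hu
  · simpa [h.eq_zero_of_neg u hu] using (abs_nonneg _).trans (hC 0)
  · have hexp : Real.exp (-σ * u) ≤ 1 := Real.exp_le_one_iff.2 (by nlinarith)
    rw [abs_mul, Real.abs_exp]
    exact (mul_le_of_le_one_right (abs_nonneg _) hexp).trans (hC u)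

theorem integrable_mul_exp (h : HasLaplaceExtension f G) (hσ : 0 < σ) :
    Integrable fun u ↦ f u * Real.exp (-σ * u) := by
  obtain ⟨C, hC⟩ := h.bounded
  have hmeas := h.measurable
  have hdom : Integrable ((Set.Ici 0).indicator fun u ↦ C * Real.exp (-σ * u)) :=
    (integrable_indicator_iff measurableSet_Ici).2 <|
      ((integrableOn_Ici_iff_integrableOn_Ioi (by simp)).2
        (exp_neg_integrableOn_Ioi 0 hσ)).const_mul C
  refine hdom.mono' (by fun_prop) (.of_forall fun u ↦ ?_)
  rcases lt_or_ge u 0 with hu | hu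
  · simp [h.eq_zero_of_neg u hu, hu]
  · rw [Set.indicator_of_mem (Set.mem_Ici.2 hu), norm_mul, Real.norm_eq_abs,
      Real.norm_eq_abs, Real.abs_exp]
    gcongr
    exact hC u

theorem integrable_prod_triangleWave (h : HasLaplaceExtension f G) (hσ : 0 < σ) (x : ℝ) :
    Integrable (Function.uncurry fun u t : ℝ ↦
        ((f u * Real.exp (-σ * u) : ℝ) : ℂ) * triangleWave (l * (x - u)) t)
      (volume.prod (volume.restrict (Set.Ioc (-1) 1))) := by
  have htri : Integrable (fun t : ℝ ↦ ((1 - |t| : ℝ) : ℂ)) (volume.restrict (Set.Ioc (-1) 1)) :=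
    (by fun_prop : Continuous _).integrableOn_Icc.mono_set Set.Ioc_subset_Icc_self
  have hdamped : Integrable fun u ↦ ((f u * Real.exp (-σ * u) : ℝ) : ℂ) :=
    (h.integrable_mul_exp hσ).ofReal
  refine ((hdamped.mul_prod htri).mul_bdd (c := 1)
    (g := fun q : ℝ × ℝ ↦ cexp (I * q.2 * (l * (x - q.1))))
    (by fun_prop : Continuous _).aestronglyMeasurable (.of_forall fun q ↦ ?_)).congr
    (.of_forall fun q ↦ ?_)
  · rw [show I * q.2 * (l * (x - q.1)) = ((q.2 * (l * (x - q.1)) : ℝ) : ℂ) * I by push_cast; ring,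
      norm_exp_ofReal_mul_I]
  · simp only [Function.uncurry, triangleWave]
    push_cast
    ring

/-- Expand the kernel as a Fourier integral and exchange the integrals. -/
theorem integral_damped_mul_fejerKernel (h : HasLaplaceExtension f G) (hl : 0 < l) (hσ : 0 < σ)
    (x : ℝ) :
    ((∫ v, f (x - v / l) * Real.exp (-σ * (x - v / l)) * fejerKernel v : ℝ) : ℂ) =
      l * ∫ t in Set.Ioc (-1 : ℝ) 1, triangleWave (l * x) t * G (σ + I * (l * t)) := by
  set damped : ℝ → ℝ := fun u ↦ f u * Real.exp (-σ * u) with hdamped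
  have expand : ∀ᵐ u : ℝ, ((damped u * fejerKernel (l * (x - u)) : ℝ) : ℂ) =
      ∫ t in Set.Ioc (-1 : ℝ) 1, (damped u : ℂ) * triangleWave (l * (x - u)) t := by
    filter_upwards [Measure.ae_ne volume x] with u hu
    rw [integral_const_mul, integral_triangleWave (mul_ne_zero hl.ne' (sub_ne_zero.2 hu.symm)),
      ofReal_mul]
  have inner (t : ℝ) : ∫ u : ℝ, (damped u : ℂ) * triangleWave (l * (x - u)) t =
      triangleWave (l * x) t * G (σ + I * (l * t)) := by
    rw [← h.integral_eq _ (by simp [hσ]), ← integral_const_mul]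
    congr 1 with u
    have hexp : cexp (I * t * (l * (x - u))) * cexp (-σ * u) =
        cexp (I * t * (l * x)) * cexp (-(σ + I * (l * t)) * u) := by
      rw [← Complex.exp_add, ← Complex.exp_add]; ring_nf
    simp only [hdamped, triangleWave]
    push_cast
    linear_combination (f u : ℂ) * (1 - (|t| : ℝ) : ℂ) * hexp
  calc ((∫ v, damped (x - v / l) * fejerKernel v : ℝ) : ℂ)
    _ = l * ∫ u : ℝ, ((damped u * fejerKernel (l * (x - u)) : ℝ) : ℂ) := by
        rw [integral_comp_sub_div_mul damped fejerKernel hl, ofReal_mul, integral_complex_ofReal]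
    _ = l * ∫ u : ℝ, ∫ t in Set.Ioc (-1 : ℝ) 1,
          (damped u : ℂ) * triangleWave (l * (x - u)) t := by rw [integral_congr_ae expand]
    _ = l * ∫ t in Set.Ioc (-1 : ℝ) 1, triangleWave (l * x) t * G (σ + I * (l * t)) := by
        rw [integral_integral_swap (h.integrable_prod_triangleWave hσ x)]
        exact congrArg _ (integral_congr_ae (.of_forall inner))

theorem tendsto_integral_damped (h : HasLaplaceExtension f G) (x : ℝ) :
    Tendsto (fun σ : ℝ ↦ ∫ v, f (x - v / l) * Real.exp (-σ * (x - v / l)) * fejerKernel v)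
      (𝓝[>] 0) (𝓝 (∫ v, f (x - v / l) * fejerKernel v)) := by
  obtain ⟨C, hC⟩ := h.bounded
  have hmeas := h.measurable
  refine tendsto_integral_filter_of_dominated_convergence (fun v ↦ C * fejerKernel v)
    (.of_forall fun σ ↦ by fun_prop) ?_ (integrable_fejerKernel.const_mul C)
    (.of_forall fun v ↦ ?_)
  · filter_upwards [self_mem_nhdsWithin] with σ hσ
    refine .of_forall fun v ↦ ?_
    rw [norm_mul, Real.norm_of_nonneg (fejerKernel_nonneg v)]
    exact mul_le_mul_of_nonneg_right (h.abs_mul_exp_le hC hσ _) (fejerKernel_nonneg v)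
  · have hcont : Continuous fun σ : ℝ ↦
        f (x - v / l) * Real.exp (-σ * (x - v / l)) * fejerKernel v := by fun_prop
    simpa using (hcont.tendsto 0).mono_left (nhdsWithin_le_nhds (s := Set.Ioi 0))

theorem exists_norm_le_of_strip (h : HasLaplaceExtension f G) (l : ℝ) :
    ∃ M, ∀ σ ∈ Set.Icc (0 : ℝ) 1, ∀ t ∈ Set.Icc (-1 : ℝ) 1, ‖G (σ + I * (l * t))‖ ≤ M := by
  have hcont : ContinuousOn (fun q : ℝ × ℝ ↦ G (q.1 + I * (l * q.2)))
      (Set.Icc (0 : ℝ) 1 ×ˢ Set.Icc (-1 : ℝ) 1) :=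
    h.continuousOn.comp (by fun_prop : Continuous _).continuousOn fun q hq ↦ by simpa using hq.1.1
  obtain ⟨M, hM⟩ := (isCompact_Icc.prod isCompact_Icc).exists_bound_of_continuousOn hcont
  exact ⟨M, fun σ hσ t ht ↦ hM (σ, t) ⟨hσ, ht⟩⟩

theorem tendsto_integral_triangleWave_mul (h : HasLaplaceExtension f G) (y l : ℝ) :
    Tendsto (fun σ : ℝ ↦ ∫ t in Set.Ioc (-1 : ℝ) 1, triangleWave y t * G (σ + I * (l * t)))
      (𝓝[>] 0) (𝓝 (∫ t in Set.Ioc (-1 : ℝ) 1, triangleWave y t * G (I * (l * t)))) := by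
  obtain ⟨M, hM⟩ := h.exists_norm_le_of_strip l
  have hσ01 : Set.Ioo (0 : ℝ) 1 ∈ 𝓝[>] (0 : ℝ) := Ioo_mem_nhdsGT one_pos
  refine tendsto_integral_filter_of_dominated_convergence (fun _ ↦ M) ?_ ?_ (integrable_const M) ?_
  · filter_upwards [hσ01] with σ hσ
    refine ContinuousOn.aestronglyMeasurable (.mul (by fun_prop) ?_) measurableSet_Ioc
    exact h.continuousOn.comp (by fun_prop : Continuous _).continuousOn fun t _ ↦ by
      simpa using hσ.1.le
  · filter_upwards [hσ01] with σ hσ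
    filter_upwards [ae_restrict_mem measurableSet_Ioc] with t ht
    have ht' := Set.Ioc_subset_Icc_self ht
    rw [norm_mul, ← one_mul M]
    exact mul_le_mul (norm_triangleWave_le_one y ht') (hM σ (Set.Ioo_subset_Icc_self hσ) t ht')
      (norm_nonneg _) zero_le_one
  · refine .of_forall fun t ↦ .const_mul _ ?_
    refine (h.continuousOn (I * (l * t)) (by simp)).tendsto.comp (tendsto_nhdsWithin_iff.2 ⟨?_, ?_⟩)
    · have hcont : Continuous fun σ : ℝ ↦ (σ + I * (l * t) : ℂ) := by fun_prop
      simpa using (hcont.tendsto 0).mono_left (nhdsWithin_le_nhds (s := Set.Ioi 0))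
    · filter_upwards [self_mem_nhdsWithin] with σ hσ
      simpa using (Set.mem_Ioi.1 hσ).le

theorem integral_mul_fejerKernel (h : HasLaplaceExtension f G) (hl : 0 < l) (x : ℝ) :
    ((∫ v, f (x - v / l) * fejerKernel v : ℝ) : ℂ) =
      l * ∫ t in Set.Ioc (-1 : ℝ) 1, triangleWave (l * x) t * G (I * (l * t)) := by
  refine tendsto_nhds_unique
    (((continuous_ofReal.tendsto _).comp (h.tendsto_integral_damped x)).congr' ?_)
    ((h.tendsto_integral_triangleWave_mul (l * x) l).const_mul (l : ℂ))
  filter_upwards [self_mem_nhdsWithin] with σ hσ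
  exact h.integral_damped_mul_fejerKernel hl hσ x

end HasLaplaceExtension

theorem tendsto_integral_triangleWave_mul_atTop (G : ℝ → ℂ) :
    Tendsto (fun y ↦ ∫ t in Set.Ioc (-1 : ℝ) 1, triangleWave y t * G t) atTop (𝓝 0) := by
  have hfreq : Tendsto (fun y : ℝ ↦ -(y / (2 * Real.pi))) atTop (cocompact ℝ) :=
    (tendsto_neg_atTop_atBot.comp (tendsto_id.atTop_div_const (by positivity))).mono_right
      atBot_le_cocompact
  refine ((Real.tendsto_integral_exp_smul_cocompact ((Set.Ioc (-1 : ℝ) 1).indicator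
    fun t ↦ ((1 - |t| : ℝ) : ℂ) * G t)).comp hfreq).congr fun y ↦ ?_
  rw [Function.comp_apply, ← integral_indicator measurableSet_Ioc]
  congr 1 with t
  by_cases ht : t ∈ Set.Ioc (-1 : ℝ) 1
  · have hphase : 2 * Real.pi * -(t * -(y / (2 * Real.pi))) = t * y := by field_simp
    rw [Set.indicator_of_mem ht, Set.indicator_of_mem ht, Circle.smul_def, Real.fourierChar_apply,
      smul_eq_mul, triangleWave, hphase]
    push_cast
    ring_nf
  · rw [Set.indicator_of_notMem ht, Set.indicator_of_notMem ht, smul_zero]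

theorem HasLaplaceExtension.tendsto_integral_mul_fejerKernel {f : ℝ → ℝ} {G : ℂ → ℂ}
    (h : HasLaplaceExtension f G) {l : ℝ} (hl : 0 < l) :
    Tendsto (fun x ↦ ∫ v, f (x - v / l) * fejerKernel v) atTop (𝓝 0) := by
  have hlim := ((tendsto_integral_triangleWave_mul_atTop fun t ↦ G (I * (l * t))).comp
    (tendsto_id.const_mul_atTop hl)).const_mul (l : ℂ)
  rw [mul_zero] at hlim
  have hre := (continuous_re.tendsto 0).comp
    (hlim.congr fun x ↦ (h.integral_mul_fejerKernel hl x).symm)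
  simpa only [Function.comp_def, ofReal_re, zero_re] using hre

end LaplaceExtension

section Tauberian

open MeasureTheory Filter Topology

variable {F K : ℝ → ℝ} {C c l : ℝ}

theorem measurable_of_monotone_mul_exp (hmono : Monotone fun u ↦ F u * Real.exp u) :
    Measurable F := by
  have hF : F = fun u ↦ F u * Real.exp u / Real.exp u := by
    funext u; rw [mul_div_cancel_right₀ _ (Real.exp_ne_zero u)]
  rw [hF]
  exact hmono.measurable.div Real.measurable_exp

theorem mul_exp_sub_le_of_monotone_mul_exp (hmono : Monotone fun u ↦ F u * Real.exp u) {u v : ℝ}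
    (huv : u ≤ v) : F u * Real.exp (u - v) ≤ F v := by
  rw [Real.exp_sub, ← mul_div_assoc, div_le_iff₀ (Real.exp_pos v)]
  exact hmono huv

theorem integrable_comp_sub_div_mul (hF : Measurable F) (hC : ∀ u, |F u| ≤ C) (hK : Integrable K)
    (x l : ℝ) : Integrable fun v ↦ F (x - v / l) * K v :=
  hK.bdd_mul (c := C) (hF.comp (by fun_prop)).aestronglyMeasurable (.of_forall fun _ ↦ hC _)

theorem mul_setIntegral_le_integral_comp_mul (hmono : Monotone fun u ↦ F u * Real.exp u)
    (hF : ∀ u, 0 ≤ F u) (hC : ∀ u, F u ≤ C) (hK : Integrable K) (hK0 : ∀ v, 0 ≤ K v) (hl : 0 < l)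
    (x R : ℝ) :
    F x * Real.exp (-(2 * (R / l))) * ∫ v in Set.Icc (-R) R, K v ≤
      ∫ v, F (x + R / l - v / l) * K v := by
  have hfi := integrable_comp_sub_div_mul (measurable_of_monotone_mul_exp hmono)
    (fun u ↦ (abs_of_nonneg (hF u)).trans_le (hC u)) hK (x + R / l) l
  rw [← integral_const_mul]
  refine (setIntegral_mono_on (hK.integrableOn.const_mul _) hfi.integrableOn measurableSet_Icc
    fun v hv ↦ mul_le_mul_of_nonneg_right ?_ (hK0 v)).trans
    (setIntegral_le_integral hfi (.of_forall fun v ↦ mul_nonneg (hF _) (hK0 v)))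
  have hvR : v / l ≤ R / l := div_le_div_of_nonneg_right hv.2 hl.le
  have hRv : -(R / l) ≤ v / l := by rw [← neg_div]; exact div_le_div_of_nonneg_right hv.1 hl.le
  refine (mul_le_mul_of_nonneg_left ?_ (hF x)).trans
    (mul_exp_sub_le_of_monotone_mul_exp hmono (by linarith))
  exact Real.exp_le_exp.2 (by linarith)

theorem integral_comp_mul_le_mul_setIntegral_add (hmono : Monotone fun u ↦ F u * Real.exp u)
    (hF : ∀ u, 0 ≤ F u) (hC : ∀ u, F u ≤ C) (hK : Integrable K) (hK0 : ∀ v, 0 ≤ K v) (hl : 0 < l)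
    (x R : ℝ) :
    ∫ v, F (x - R / l - v / l) * K v ≤
      F x * Real.exp (2 * (R / l)) * (∫ v in Set.Icc (-R) R, K v) +
        C * ∫ v in (Set.Icc (-R) R)ᶜ, K v := by
  have hfi := integrable_comp_sub_div_mul (measurable_of_monotone_mul_exp hmono)
    (fun u ↦ (abs_of_nonneg (hF u)).trans_le (hC u)) hK (x - R / l) l
  rw [← integral_add_compl measurableSet_Icc hfi, ← integral_const_mul, ← integral_const_mul]
  refine add_le_add
    (setIntegral_mono_on hfi.integrableOn (hK.integrableOn.const_mul _) measurableSet_Icc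
      fun v hv ↦ mul_le_mul_of_nonneg_right ?_ (hK0 v))
    (setIntegral_mono_on hfi.integrableOn (hK.integrableOn.const_mul _) measurableSet_Icc.compl
      fun v _ ↦ mul_le_mul_of_nonneg_right (hC _) (hK0 v))
  have hvR : v / l ≤ R / l := div_le_div_of_nonneg_right hv.2 hl.le
  have hRv : -(R / l) ≤ v / l := by rw [← neg_div]; exact div_le_div_of_nonneg_right hv.1 hl.le
  rw [← div_le_iff₀ (Real.exp_pos _), div_eq_mul_inv, ← Real.exp_neg]
  refine (mul_le_mul_of_nonneg_left ?_ (hF _)).trans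
    (mul_exp_sub_le_of_monotone_mul_exp hmono (show x - R / l - v / l ≤ x by linarith))
  exact Real.exp_le_exp.2 (by linarith)

theorem tendsto_setIntegral_Icc_neg_self (hK : Integrable K) :
    Tendsto (fun R : ℝ ↦ ∫ v in Set.Icc (-R) R, K v) atTop (𝓝 (∫ v, K v)) :=
  (aecover_Icc tendsto_neg_atTop_atBot tendsto_id).integral_tendsto_of_countably_generated hK

theorem tendsto_setIntegral_compl_Icc_neg_self (hK : Integrable K) :
    Tendsto (fun R : ℝ ↦ ∫ v in (Set.Icc (-R) R)ᶜ, K v) atTop (𝓝 0) := by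
  simpa [setIntegral_compl measurableSet_Icc hK] using
    (tendsto_setIntegral_Icc_neg_self hK).const_sub (∫ v, K v)

/-- Smooth at scale `1 / l` with `l = R ^ 2`, truncating the kernel at `R`, so that both the
truncation error and the shift `R / l = 1 / R` vanish as `R → ∞`. -/
theorem tendsto_of_forall_tendsto_integral_comp_mul (hmono : Monotone fun u ↦ F u * Real.exp u)
    (hF : ∀ u, 0 ≤ F u) (hC : ∀ u, F u ≤ C) (hK : Integrable K) (hK0 : ∀ v, 0 ≤ K v)
    (hKpos : 0 < ∫ v, K v)
    (hlim : ∀ l > 0, Tendsto (fun x ↦ ∫ v, F (x - v / l) * K v) atTop (𝓝 (c * ∫ v, K v))) :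
    Tendsto F atTop (𝓝 c) := by
  have hin := tendsto_setIntegral_Icc_neg_self hK
  have hout := tendsto_setIntegral_compl_Icc_neg_self hK
  have hshift : Tendsto (fun R : ℝ ↦ 2 * (R / R ^ 2)) atTop (𝓝 0) := by
    have hinv : (fun R : ℝ ↦ 2 * (R / R ^ 2)) = fun R ↦ 2 * R⁻¹ := by funext R; field_simp
    simpa [hinv] using (tendsto_inv_atTop_zero (𝕜 := ℝ)).const_mul 2
  refine tendsto_order.2 ⟨fun a ha ↦ ?_, fun a ha ↦ ?_⟩
  · have hR : Tendsto (fun R : ℝ ↦ a * Real.exp (2 * (R / R ^ 2)) *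
        (∫ v in Set.Icc (-R) R, K v) + C * ∫ v in (Set.Icc (-R) R)ᶜ, K v)
        atTop (𝓝 (a * ∫ v, K v)) := by
      simpa using (((Real.continuous_exp.tendsto _).comp hshift).const_mul a |>.mul hin).add
        (hout.const_mul C)
    obtain ⟨R, hRlt, hR0⟩ := ((hR.eventually_lt_const (mul_lt_mul_of_pos_right ha hKpos)).and
      (eventually_gt_atTop 0)).exists
    filter_upwards [((hlim (R ^ 2) (by positivity)).comp
      (tendsto_atTop_add_const_right _ (-(R / R ^ 2)) tendsto_id)).eventually_const_lt hRlt]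
      with x hx
    have hxF := hx.trans_le
      (integral_comp_mul_le_mul_setIntegral_add hmono hF hC hK hK0 (by positivity) x R)
    by_contra! hFa
    exact hxF.not_ge (by gcongr; exact setIntegral_nonneg measurableSet_Icc fun v _ ↦ hK0 v)
  · have hR : Tendsto (fun R : ℝ ↦ a * Real.exp (-(2 * (R / R ^ 2))) *
        ∫ v in Set.Icc (-R) R, K v) atTop (𝓝 (a * ∫ v, K v)) := by
      simpa using ((Real.continuous_exp.tendsto _).comp hshift.neg).const_mul a |>.mul hin
    obtain ⟨R, hRlt, hR0⟩ := ((hR.eventually_const_lt (mul_lt_mul_of_pos_right ha hKpos)).and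
      (eventually_gt_atTop 0)).exists
    filter_upwards [((hlim (R ^ 2) (by positivity)).comp
      (tendsto_atTop_add_const_right _ (R / R ^ 2) tendsto_id)).eventually_lt_const hRlt] with x hx
    have hxF := (mul_setIntegral_le_integral_comp_mul hmono hF hC hK hK0
      (by positivity) x R).trans_lt hx
    by_contra! hFa
    exact hxF.not_ge (by gcongr; exact setIntegral_nonneg measurableSet_Icc fun v _ ↦ hK0 v)

theorem tendsto_integral_indicator_Ici_comp_mul (hK : Integrable K) (c l : ℝ) :
    Tendsto (fun x ↦ ∫ v, (Set.Ici 0).indicator (fun _ ↦ c) (x - v / l) * K v) atTop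
      (𝓝 (c * ∫ v, K v)) := by
  have hind : Measurable ((Set.Ici (0 : ℝ)).indicator fun _ ↦ c) :=
    measurable_const.indicator measurableSet_Ici
  rw [← integral_const_mul]
  refine tendsto_integral_filter_of_dominated_convergence (fun v ↦ |c| * |K v|)
    (.of_forall fun x ↦ ((hind.comp (by fun_prop)).aestronglyMeasurable.mul hK.1))
    (.of_forall fun x ↦ .of_forall fun v ↦ ?_) (hK.abs.const_mul _) (.of_forall fun v ↦ ?_)
  · rw [norm_mul, Real.norm_eq_abs (K v)]
    exact mul_le_mul_of_nonneg_right (norm_indicator_le_norm_self _ _) (abs_nonneg _)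
  · refine tendsto_const_nhds.congr' ?_
    filter_upwards [eventually_ge_atTop (v / l)] with x hx
    rw [Set.indicator_of_mem (Set.mem_Ici.2 (sub_nonneg.2 hx))]

/-- The Wiener–Ikehara theorem, in logarithmic scale. -/
theorem HasLaplaceExtension.tendsto_of_monotone_mul_exp {G : ℂ → ℂ}
    (h : HasLaplaceExtension (fun u ↦ F u - (Set.Ici 0).indicator (fun _ ↦ c) u) G)
    (hF : ∀ u, 0 ≤ F u) (hmono : Monotone fun u ↦ F u * Real.exp u) :
    Tendsto F atTop (𝓝 c) := by
  obtain ⟨B, hB⟩ := h.bounded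
  have hind (u : ℝ) : |(Set.Ici 0).indicator (fun _ ↦ c) u| ≤ |c| :=
    norm_indicator_le_norm_self (fun _ ↦ c) u
  have hFB (u : ℝ) : F u ≤ B + |c| := by
    linarith [(abs_le.1 (hB u)).2, (abs_le.1 (hind u)).2]
  refine tendsto_of_forall_tendsto_integral_comp_mul hmono hF hFB integrable_fejerKernel
    fejerKernel_nonneg integral_fejerKernel_pos fun l hl ↦ ?_
  have hsum := (h.tendsto_integral_mul_fejerKernel hl).add
    (tendsto_integral_indicator_Ici_comp_mul integrable_fejerKernel c l)
  rw [zero_add] at hsum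
  refine hsum.congr fun x ↦ ?_
  rw [← integral_add (integrable_comp_sub_div_mul h.measurable hB integrable_fejerKernel x l)
    (integrable_comp_sub_div_mul (measurable_const.indicator measurableSet_Ici) hind
      integrable_fejerKernel x l)]
  simp only [← add_mul, sub_add_cancel]

end Tauberian

/-! ### The prime number theorem -/

section ChebyshevPsi

open MeasureTheory Filter Topology Complex ArithmeticFunction

/-- `ψ(e ^ u) / e ^ u`, the Chebyshev function normalised for the Laplace transform. -/
noncomputable def psiRatioExp (u : ℝ) : ℝ := Chebyshev.psi (Real.exp u) / Real.exp u

theorem psiRatioExp_nonneg (u : ℝ) : 0 ≤ psiRatioExp u :=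
  div_nonneg (Chebyshev.psi_nonneg _) (Real.exp_pos u).le

theorem psiRatioExp_le (u : ℝ) : psiRatioExp u ≤ Real.log 4 + 4 :=
  (div_le_iff₀ (Real.exp_pos u)).2 (Chebyshev.psi_le_const_mul_self (Real.exp_pos u).le)

theorem psiRatioExp_eq_zero_of_neg {u : ℝ} (hu : u < 0) : psiRatioExp u = 0 := by
  rw [psiRatioExp, Chebyshev.psi_eq_zero_of_le_one (Real.exp_le_one_iff.2 hu.le), zero_div]

theorem monotone_psiRatioExp_mul_exp : Monotone fun u ↦ psiRatioExp u * Real.exp u := by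
  simp only [psiRatioExp, div_mul_cancel₀ _ (Real.exp_ne_zero _)]
  exact Chebyshev.psi_mono.comp Real.exp_monotone

theorem measurable_psiRatioExp : Measurable psiRatioExp :=
  measurable_of_monotone_mul_exp monotone_psiRatioExp_mul_exp

theorem psi_eq_sum_Icc_one (x : ℝ) :
    Chebyshev.psi x = ∑ k ∈ Finset.Icc 1 ⌊x⌋₊, vonMangoldt k := rfl

theorem integral_Ioi_one_eq_integral_comp_exp (g : ℝ → ℂ) :
    ∫ t in Set.Ioi (1 : ℝ), g t = ∫ u in Set.Ioi (0 : ℝ), (Real.exp u : ℂ) * g (Real.exp u) := by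
  have himage : Real.exp '' Set.Ioi 0 = Set.Ioi 1 := by
    ext y
    exact ⟨fun ⟨x, hx, hxy⟩ ↦ hxy ▸ Real.one_lt_exp_iff.2 hx, fun hy ↦
      ⟨Real.log y, Real.log_pos hy, Real.exp_log (one_pos.trans hy)⟩⟩
  rw [← himage, integral_image_eq_integral_abs_deriv_smul measurableSet_Ioi
    (fun x _ ↦ (Real.hasDerivAt_exp x).hasDerivWithinAt) Real.exp_injective.injOn]
  simp only [Real.abs_exp, real_smul]

theorem LSeries_vonMangoldt_eq_mul_integral {s : ℂ} (hs : 1 < s.re) :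
    LSeries (fun n ↦ (vonMangoldt n : ℂ)) s =
      s * ∫ u in Set.Ioi (0 : ℝ), (psiRatioExp u : ℂ) * cexp (-(s - 1) * u) := by
  have hbigO : (fun n : ℕ ↦ ∑ k ∈ Finset.Icc 1 n, vonMangoldt k) =O[atTop]
      fun n ↦ (n : ℝ) ^ (1 : ℝ) := by
    refine .of_bound (Real.log 4 + 4) (.of_forall fun n ↦ ?_)
    have hpsi := psi_eq_sum_Icc_one n
    rw [Nat.floor_natCast] at hpsi
    rw [← hpsi, Real.norm_of_nonneg (Chebyshev.psi_nonneg n), Real.rpow_one,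
      Real.norm_of_nonneg n.cast_nonneg]
    exact Chebyshev.psi_le_const_mul_self n.cast_nonneg
  rw [LSeries_eq_mul_integral_of_nonneg (fun n ↦ vonMangoldt n) zero_le_one hs hbigO
    fun _ ↦ vonMangoldt_nonneg, integral_Ioi_one_eq_integral_comp_exp]
  congr 2 with u
  have hpow : (Real.exp u : ℂ) ^ (-(s + 1)) = cexp (-(s + 1) * u) := by
    rw [cpow_def_of_ne_zero (by simp), ← ofReal_log (Real.exp_pos u).le, Real.log_exp, mul_comm]
  have hexp : cexp (-(s - 1) * u) = cexp u * cexp u * cexp (-(s + 1) * u) := by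
    rw [← Complex.exp_add, ← Complex.exp_add]; ring_nf
  rw [← ofReal_sum, ← psi_eq_sum_Icc_one, hpow, hexp, psiRatioExp]
  push_cast
  field_simp

/-- The logarithmic derivative `-ζ' / ζ` minus its polar part, continuous on `1 ≤ re s`. It is
the case `q = 1` of the function behind Dirichlet's theorem. -/
noncomputable def vonMangoldtAux : ℂ → ℂ := vonMangoldt.LFunctionResidueClassAux (1 : ZMod 1)

theorem LSeries_vonMangoldt_eq_aux_add {s : ℂ} (hs : 1 < s.re) :
    LSeries (fun n ↦ (vonMangoldt n : ℂ)) s = vonMangoldtAux s + 1 / (s - 1) := by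
  have hres : (fun n ↦ (vonMangoldt.residueClass (1 : ZMod 1) n : ℂ)) =
      fun n ↦ (vonMangoldt n : ℂ) := by
    funext n; simp [vonMangoldt.residueClass, Subsingleton.elim _ (1 : ZMod 1)]
  rw [vonMangoldtAux, vonMangoldt.eqOn_LFunctionResidueClassAux (q := 1) isUnit_one hs]
  simp [hres]

theorem one_add_ne_zero_of_re_nonneg {s : ℂ} (hs : 0 ≤ s.re) : 1 + s ≠ 0 := fun h ↦ by
  have hre := congrArg re h
  simp only [add_re, one_re, zero_re] at hre
  linarith

theorem integral_psiRatioExp_sub_one {s : ℂ} (hs : 0 < s.re) :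
    ∫ u in Set.Ioi (0 : ℝ), ((psiRatioExp u - 1 : ℝ) : ℂ) * cexp (-s * u) =
      (vonMangoldtAux (1 + s) - 1) / (1 + s) := by
  have hs0 : s ≠ 0 := by rintro rfl; simp at hs
  have hs1 := one_add_ne_zero_of_re_nonneg hs.le
  have hexp : IntegrableOn (fun u : ℝ ↦ cexp (-s * u)) (Set.Ioi 0) :=
    integrableOn_exp_mul_complex_Ioi (by simpa using hs) 0
  have hpsi : IntegrableOn (fun u : ℝ ↦ (psiRatioExp u : ℂ) * cexp (-s * u)) (Set.Ioi 0) :=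
    hexp.bdd_mul (c := Real.log 4 + 4)
      (measurable_ofReal.comp measurable_psiRatioExp).aestronglyMeasurable
      (.of_forall fun u ↦ by
        rw [norm_real, Real.norm_of_nonneg (psiRatioExp_nonneg u)]; exact psiRatioExp_le u)
  have hone : ∫ u in Set.Ioi (0 : ℝ), cexp (-s * u) = 1 / s := by
    rw [integral_exp_mul_complex_Ioi (by simpa using hs) 0]; simp
  have hL := LSeries_vonMangoldt_eq_mul_integral (s := 1 + s) (by simpa using hs)
  rw [LSeries_vonMangoldt_eq_aux_add (by simpa using hs), add_sub_cancel_left] at hL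
  simp only [ofReal_sub, ofReal_one, sub_mul, one_mul]
  rw [integral_sub hpsi hexp, hone, eq_div_iff hs1, sub_mul, mul_comm _ (1 + s), ← hL]
  field_simp
  ring

theorem hasLaplaceExtension_psiRatioExp : HasLaplaceExtension
    (fun u ↦ psiRatioExp u - (Set.Ici 0).indicator (fun _ ↦ 1) u)
    (fun s ↦ (vonMangoldtAux (1 + s) - 1) / (1 + s)) where
  measurable := measurable_psiRatioExp.sub (measurable_const.indicator measurableSet_Ici)
  bounded := ⟨Real.log 4 + 4, fun u ↦ by
    have hlog : 0 < Real.log 4 := Real.log_pos (by norm_num)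
    have hind : (Set.Ici (0 : ℝ)).indicator (fun _ ↦ (1 : ℝ)) u ∈ Set.Icc 0 1 := by
      by_cases hu : u ∈ Set.Ici (0 : ℝ) <;> simp [hu]
    rw [abs_le]
    constructor <;> linarith [psiRatioExp_nonneg u, psiRatioExp_le u, hind.1, hind.2]⟩
  eq_zero_of_neg u hu := by simp [psiRatioExp_eq_zero_of_neg hu, hu]
  continuousOn := by
    refine .div (.sub ?_ continuousOn_const) (by fun_prop) fun s hs ↦
      one_add_ne_zero_of_re_nonneg hs
    exact (vonMangoldt.continuousOn_LFunctionResidueClassAux (1 : ZMod 1)).comp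
      (by fun_prop) fun s (hs : 0 ≤ s.re) ↦ by simpa using hs
  integral_eq s hs := by
    rw [← integral_psiRatioExp_sub_one hs, ← integral_Ici_eq_integral_Ioi,
      ← integral_indicator measurableSet_Ici]
    congr 1 with u
    by_cases hu : u < 0
    · simp [psiRatioExp_eq_zero_of_neg hu, hu]
    · simp [not_lt.1 hu]

theorem tendsto_psi_div_self : Tendsto (fun x ↦ Chebyshev.psi x / x) atTop (𝓝 1) := by
  refine ((hasLaplaceExtension_psiRatioExp.tendsto_of_monotone_mul_exp psiRatioExp_nonneg
    monotone_psiRatioExp_mul_exp).comp Real.tendsto_log_atTop).congr' ?_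
  filter_upwards [eventually_gt_atTop 0] with x hx
  rw [Function.comp_apply, psiRatioExp, Real.exp_log hx]

end ChebyshevPsi

section PrimeCounting

open Filter Topology Asymptotics Nat.Prime

theorem isEquivalent_theta : Chebyshev.theta ~[atTop] id := by
  have hpsi : Chebyshev.psi ~[atTop] id := by
    refine (isEquivalent_iff_tendsto_one ?_).2 tendsto_psi_div_self
    filter_upwards [eventually_ne_atTop 0] with x hx using hx
  have hsqrt : Real.sqrt =o[atTop] (id : ℝ → ℝ) := by
    refine (isLittleO_iff_tendsto' ?_).2
      (Real.tendsto_sqrt_atTop.inv_tendsto_atTop.congr fun x ↦ ?_)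
    · filter_upwards [eventually_ne_atTop 0] with x hx hx0 using absurd hx0 hx
    · rw [id, Real.sqrt_div_self', Pi.inv_apply, one_div]
  simpa using hpsi.sub_isLittleO (Chebyshev.isBigO_psi_sub_theta_sqrt.trans_isLittleO hsqrt)

theorem isEquivalent_primeCounting :
    (fun x : ℝ ↦ (π ⌊x⌋₊ : ℝ)) ~[atTop] fun x ↦ x / Real.log x := by
  refine ((isEquivalent_theta.div (IsEquivalent.refl (u := Real.log))).add_isLittleO
    Chebyshev.integral_theta_div_log_sq_isLittleO).congr_left ?_
  filter_upwards [eventually_ge_atTop 2] with x hx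
  exact (Chebyshev.primeCounting_eq_theta_div_log_add_integral hx).symm

theorem isEquivalent_primeCounting_natCast :
    (fun n : ℕ ↦ (π n : ℝ)) ~[atTop] fun n ↦ n / Real.log n := by
  simpa [Function.comp_def] using
    isEquivalent_primeCounting.comp_tendsto tendsto_natCast_atTop_atTop

theorem tendsto_primeCounting_mul_two_add_log_div :
    Tendsto (fun n : ℕ ↦ π n * (2 + Real.log n) / n) atTop (𝓝 1) := by
  have hlog : (fun x ↦ 2 + Real.log x) ~[atTop] Real.log :=
    Real.isLittleO_const_log_atTop.add_isEquivalent .refl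
  have hmul := isEquivalent_primeCounting_natCast.mul
    (hlog.comp_tendsto tendsto_natCast_atTop_atTop)
  refine ((isEquivalent_iff_tendsto_one ?_).1 (hmul.congr_right ?_))
  · filter_upwards [eventually_ne_atTop 0] with n hn using Nat.cast_ne_zero.2 hn
  · filter_upwards [eventually_ge_atTop 2] with n hn
    have hlogn : Real.log n ≠ 0 := (Real.log_pos (mod_cast hn)).ne'
    simp [hlogn]

theorem exists_primeCounting_mul_two_add_log_le :
    ∃ B, 0 ≤ B ∧ ∀ n : ℕ, π n * (2 + Real.log n) ≤ B * n := by
  obtain ⟨B, hB⟩ := tendsto_primeCounting_mul_two_add_log_div.bddAbove_range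
  have hB' (n : ℕ) : π n * (2 + Real.log n) / n ≤ B := hB ⟨n, rfl⟩
  refine ⟨B, by simpa using hB' 0, fun n ↦ ?_⟩
  rcases n.eq_zero_or_pos with rfl | hn
  · simp
  · exact (div_le_iff₀ (mod_cast hn)).1 (hB' n)

theorem two_add_log_mul_le {x y : ℝ} (hx : 1 ≤ x) (hy : 1 ≤ y) :
    2 + Real.log (x * y) ≤ (2 + Real.log x) * √y := by
  have hlogx := Real.log_nonneg hx
  have hsqrt : 1 + Real.log y / 2 ≤ √y := by
    rw [← Real.log_sqrt (zero_le_one.trans hy)]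
    linarith [Real.log_le_sub_one_of_pos (Real.sqrt_pos.2 (zero_lt_one.trans_le hy))]
  rw [Real.log_mul (by positivity) (by positivity)]
  nlinarith [Real.log_nonneg hy]

theorem two_add_log_le_mul_sqrt {n j : ℕ} (hj : 0 < j) (hjn : j ≤ n) :
    2 + Real.log n ≤ (2 + Real.log (n / j : ℕ)) * √(2 * j) := by
  have hj1 : (1 : ℝ) ≤ j := mod_cast hj
  have hdiv : 1 ≤ n / j := Nat.div_pos hjn hj
  have hn : n ≤ n / j * (2 * j) := by
    calc n ≤ j * (n / j + 1) := (Nat.lt_mul_div_succ n hj).le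
      _ ≤ n / j * (2 * j) := by nlinarith
  refine le_trans ?_ (two_add_log_mul_le (mod_cast hdiv) (by linarith))
  gcongr
  · exact_mod_cast hj.trans_le hjn
  · exact_mod_cast hn

theorem exists_primeCounting_div_le : ∃ C, ∀ᶠ n : ℕ in atTop, ∀ j > 0,
    (π (n / j) : ℝ) / π n ≤ C * (√j)⁻¹ := by
  obtain ⟨B, hB0, hB⟩ := exists_primeCounting_mul_two_add_log_le
  refine ⟨2 * √2 * B, ?_⟩
  filter_upwards [tendsto_primeCounting_mul_two_add_log_div.eventually_const_lt one_half_lt_one,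
    eventually_ge_atTop 2] with n hlower hn j hj
  rcases lt_or_ge n j with hnj | hjn
  · simp only [Nat.div_eq_of_lt hnj, Nat.primeCounting_zero, Nat.cast_zero, zero_div]
    positivity
  have hn0 : (0 : ℝ) < n := by positivity
  have hj0 : (0 : ℝ) < j := mod_cast hj
  have hlog : 0 < 2 + Real.log n := by positivity
  have hπ : (0 : ℝ) < π n :=
    mod_cast Nat.pos_of_ne_zero (mt Nat.primeCounting_eq_zero_iff.1 (by omega))
  rw [lt_div_iff₀ hn0] at hlower
  rw [div_le_iff₀ hπ]
  refine le_of_mul_le_mul_right ?_ hlog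
  calc (π (n / j) : ℝ) * (2 + Real.log n)
    _ ≤ π (n / j) * ((2 + Real.log (n / j : ℕ)) * √(2 * j)) := by
        gcongr; exact two_add_log_le_mul_sqrt hj hjn
    _ = π (n / j) * (2 + Real.log (n / j : ℕ)) * √(2 * j) := by ring
    _ ≤ B * (n / j : ℕ) * √(2 * j) := by gcongr ?_ * _; exact hB _
    _ ≤ B * (n / j) * √(2 * j) := by gcongr; exact Nat.cast_div_le
    _ = 2 * √2 * B * (√j)⁻¹ * (1 / 2 * n) := by
        rw [Real.sqrt_mul zero_le_two]
        field_simp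
        rw [Real.sq_sqrt hj0.le]
    _ ≤ 2 * √2 * B * (√j)⁻¹ * (π n * (2 + Real.log n)) := by gcongr
    _ = 2 * √2 * B * (√j)⁻¹ * π n * (2 + Real.log n) := by ring

theorem tendsto_primeCounting_floor_div_div {a : ℝ} (ha : 0 < a) :
    Tendsto (fun x : ℝ ↦ (π ⌊x / a⌋₊ : ℝ) / π ⌊x⌋₊) atTop (𝓝 a⁻¹) := by
  have hratio := (isEquivalent_primeCounting.comp_tendsto
    (tendsto_id.atTop_div_const ha)).div isEquivalent_primeCounting
  have hlog : Tendsto (fun x ↦ Real.log x / (Real.log x - Real.log a)) atTop (𝓝 1) := by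
    have hequiv : (fun x ↦ Real.log x - Real.log a) ~[atTop] Real.log :=
      IsEquivalent.refl.sub_isLittleO Real.isLittleO_const_log_atTop
    refine (isEquivalent_iff_tendsto_one ?_).1 hequiv.symm
    filter_upwards [Real.tendsto_log_atTop.eventually_gt_atTop (Real.log a)] with x hx
    exact (sub_pos.2 hx).ne'
  refine hratio.symm.tendsto_nhds ((by simpa using hlog.const_mul a⁻¹ : Tendsto
    (fun x ↦ a⁻¹ * (Real.log x / (Real.log x - Real.log a))) atTop (𝓝 a⁻¹)).congr' ?_)
  filter_upwards [eventually_gt_atTop 0] with x hx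
  simp only [Pi.div_apply, Function.comp_apply, id_eq, Real.log_div hx.ne' ha.ne']
  field_simp

theorem tendsto_primeCounting_div_div {j : ℕ} (hj : 0 < j) :
    Tendsto (fun n : ℕ ↦ (π (n / j) : ℝ) / π n) atTop (𝓝 (j : ℝ)⁻¹) := by
  simpa [Function.comp_def, Nat.floor_div_natCast] using
    (tendsto_primeCounting_floor_div_div (Nat.cast_pos.2 hj)).comp tendsto_natCast_atTop_atTop

theorem isLittleO_rpow_mul_log_primeCounting {c : ℝ} (hc : c < 1) :
    (fun n : ℕ ↦ (n : ℝ) ^ c * Real.log (n + 1)) =o[atTop] fun n ↦ (π n : ℝ) := by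
  have hrpow : (fun x : ℝ ↦ x ^ c * Real.log x) =o[atTop] fun x ↦ x / Real.log x := by
    refine ((isBigO_refl (fun x : ℝ ↦ x ^ c / Real.log x) atTop).mul_isLittleO
      (isLittleO_log_rpow_rpow_atTop 2 (sub_pos.2 hc))).congr' ?_ ?_
    all_goals filter_upwards [eventually_gt_atTop 1] with x hx
    all_goals have hlog := Real.log_pos hx
    · rw [Real.rpow_two]
      field_simp
    · rw [div_mul_eq_mul_div, ← Real.rpow_add (zero_lt_one.trans hx), add_sub_cancel, Real.rpow_one]
  have hlog : (fun n : ℕ ↦ Real.log (n + 1)) =O[atTop] fun n ↦ Real.log n := by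
    refine .of_bound 2 ?_
    filter_upwards [eventually_ge_atTop 2] with n hn
    have hn2 : (2 : ℝ) ≤ n := mod_cast hn
    rw [Real.norm_of_nonneg (Real.log_nonneg (by linarith)),
      Real.norm_of_nonneg (Real.log_nonneg (by linarith)), ← Real.log_rpow (by positivity),
      Real.rpow_two]
    exact Real.log_le_log (by positivity) (by nlinarith)
  exact (((isBigO_refl _ _).mul hlog).trans_isLittleO
    (hrpow.comp_tendsto tendsto_natCast_atTop_atTop)).trans_isEquivalent
    isEquivalent_primeCounting_natCast.symm

end PrimeCounting

/-! ### The asymptotic count -/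

section PrimeQuotientProd

open Filter Topology Asymptotics Nat.Prime

theorem log_natCast_add_one_eq_sum (m : ℕ) :
    Real.log (m + 1) = ∑ i ∈ Finset.range m, Real.log (1 + 1 / ((i : ℝ) + 1)) := by
  induction m with
  | zero => simp
  | succ m ih =>
    rw [Finset.sum_range_succ, ← ih, ← Real.log_mul (by positivity) (by positivity)]
    congr 1
    push_cast
    field_simp

/-- Expand `log (n / p + 1)` as a telescoping sum and exchange the summations: the `i`-th term
occurs once for every prime `p ≤ n / (i + 1)`. -/
theorem log_primeQuotientProd (n : ℕ) :
    Real.log (primeQuotientProd n) =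
      ∑' i : ℕ, (π (n / (i + 1)) : ℝ) * Real.log (1 + 1 / ((i : ℝ) + 1)) := by
  have htel (p : ℕ) : Real.log ((n / p : ℕ) + 1) =
      ∑ i ∈ Finset.range n with i + 1 ≤ n / p, Real.log (1 + 1 / ((i : ℝ) + 1)) := by
    rw [log_natCast_add_one_eq_sum]
    congr 1 with i
    have := Nat.div_le_self n p
    simp only [Finset.mem_range, Finset.mem_filter]
    omega
  have hprimes (i : ℕ) : {p ∈ n.primesLE | i + 1 ≤ n / p} = (n / (i + 1)).primesLE := by
    ext p
    simp only [Finset.mem_filter, Nat.mem_primesLE]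
    refine ⟨fun ⟨⟨_, hp⟩, hi⟩ ↦ ⟨?_, hp⟩, fun ⟨hpn, hp⟩ ↦
      ⟨⟨hpn.trans (Nat.div_le_self _ _), hp⟩, ?_⟩⟩
    · rwa [Nat.le_div_iff_mul_le i.succ_pos, mul_comm, ← Nat.le_div_iff_mul_le hp.pos]
    · rwa [Nat.le_div_iff_mul_le hp.pos, mul_comm, ← Nat.le_div_iff_mul_le i.succ_pos]
  calc Real.log (primeQuotientProd n)
    _ = ∑ p ∈ n.primesLE, Real.log ((n / p : ℕ) + 1) := by
        rw [primeQuotientProd, Nat.cast_prod, Real.log_prod fun p _ ↦ by positivity]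
        simp only [Nat.cast_add, Nat.cast_one]
    _ = ∑ i ∈ Finset.range n, (π (n / (i + 1)) : ℝ) * Real.log (1 + 1 / ((i : ℝ) + 1)) := by
        simp only [htel, Finset.sum_filter]
        rw [Finset.sum_comm]
        simp only [← Finset.sum_filter, hprimes, Finset.sum_const, nsmul_eq_mul,
          Nat.primesLE_card_eq_primeCounting]
    _ = ∑' i : ℕ, (π (n / (i + 1)) : ℝ) * Real.log (1 + 1 / ((i : ℝ) + 1)) := by
        refine (tsum_eq_sum fun i hi ↦ ?_).symm
        rw [Nat.div_eq_of_lt (Nat.lt_succ_of_le (by simpa using hi))]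
        simp

theorem log_one_add_one_div_mem_Icc (i : ℕ) :
    Real.log (1 + 1 / ((i : ℝ) + 1)) ∈ Set.Icc 0 (1 / ((i : ℝ) + 1)) := by
  have hpos : (0 : ℝ) < 1 / (i + 1) := by positivity
  exact ⟨Real.log_nonneg (by linarith),
    (Real.log_le_sub_one_of_pos (by linarith)).trans_eq (add_sub_cancel_left _ _)⟩

theorem summable_inv_sqrt_mul_inv :
    Summable fun i : ℕ ↦ (√((i : ℝ) + 1))⁻¹ * (1 / ((i : ℝ) + 1)) := by
  have hsum := (summable_nat_add_iff 1).2
    ((Real.summable_one_div_nat_rpow (p := 3 / 2)).2 (by norm_num))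
  refine hsum.congr fun i ↦ ?_
  rw [Nat.cast_add_one, show (3 / 2 : ℝ) = 1 / 2 + 1 by norm_num, Real.rpow_add (by positivity),
    Real.rpow_one, ← Real.sqrt_eq_rpow]
  field_simp

theorem tendsto_log_primeQuotientProd_div :
    Tendsto (fun n : ℕ ↦ Real.log (primeQuotientProd n) / π n) atTop
      (𝓝 (∑' i : ℕ, 1 / ((i : ℝ) + 1) * Real.log (1 + 1 / ((i : ℝ) + 1)))) := by
  obtain ⟨C, hC⟩ := exists_primeCounting_div_le
  have hlim (i : ℕ) : Tendsto (fun n : ℕ ↦ (π (n / (i + 1)) : ℝ) / π n) atTop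
      (𝓝 (1 / ((i : ℝ) + 1))) := by
    simpa using tendsto_primeCounting_div_div i.succ_pos
  have htannery := tendsto_tsum_of_dominated_convergence
    (summable_inv_sqrt_mul_inv.mul_left C)
    (fun i ↦ (hlim i).mul_const (Real.log (1 + 1 / ((i : ℝ) + 1)))) ?_
  · refine htannery.congr fun n ↦ ?_
    rw [log_primeQuotientProd, ← tsum_div_const]
    simp only [div_mul_eq_mul_div]
  · filter_upwards [hC] with n hn i
    have hratio : (π (n / (i + 1)) : ℝ) / π n ≤ C * (√((i : ℝ) + 1))⁻¹ := by
      simpa using hn (i + 1) i.succ_pos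
    obtain ⟨hlog0, hlog⟩ := log_one_add_one_div_mem_Icc i
    rw [Real.norm_of_nonneg (by positivity), ← mul_assoc]
    exact mul_le_mul hratio hlog hlog0 ((by positivity : (0 : ℝ) ≤ _).trans hratio)

theorem tendsto_mul_log_div_primeCounting {e : ℕ → ℕ} {c : ℝ} (hc : c < 1)
    (he : (fun n ↦ (e n : ℝ)) =O[atTop] fun n ↦ (n : ℝ) ^ c) :
    Tendsto (fun n : ℕ ↦ e n * Real.log (n + 1) / π n) atTop (𝓝 0) :=
  ((he.mul (isBigO_refl _ _)).trans_isLittleO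
    (isLittleO_rpow_mul_log_primeCounting hc)).tendsto_div_nhds_zero

end PrimeQuotientProd

section Count

open Filter Topology Asymptotics Nat.Prime

theorem log_le_log_add_mul_of_le_mul_pow {a b n e : ℕ} (ha : 0 < a) (h : a ≤ b * (n + 1) ^ e) :
    Real.log a ≤ Real.log b + e * Real.log (n + 1) := by
  have hb : b ≠ 0 := by rintro rfl; exact ha.not_ge (by simpa using h)
  calc Real.log a ≤ Real.log (b * (n + 1) ^ e) :=
        Real.log_le_log (mod_cast ha) (mod_cast h)
    _ = Real.log b + e * Real.log (n + 1) := by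
        rw [Real.log_mul (mod_cast hb) (by positivity), Real.log_pow]

/-- The least `s` with `n < s ^ 6`. Primes above `s ^ 4` count as large, and all but `O(s ^ 5)`
elements of a Sidon subset of `{1, …, n}` are multiples of distinct large primes. -/
noncomputable def sixthRootScale (n : ℕ) : ℕ := ⌊(n : ℝ) ^ (1 / 6 : ℝ)⌋₊ + 1

theorem lt_sixthRootScale_pow (n : ℕ) : n < sixthRootScale n ^ 6 := by
  have hroot : ((n : ℝ) ^ (1 / 6 : ℝ)) ^ 6 = n := by
    rw [← Real.rpow_natCast, ← Real.rpow_mul n.cast_nonneg]; norm_num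
  have hlt : (n : ℝ) < (sixthRootScale n : ℝ) ^ 6 := by
    rw [← hroot, sixthRootScale, Nat.cast_add_one]
    gcongr
    exact Nat.lt_floor_add_one _
  exact_mod_cast hlt

theorem isBigO_sixthRootScale_pow (m : ℕ) :
    (fun n ↦ ((sixthRootScale n ^ m : ℕ) : ℝ)) =O[atTop] fun n : ℕ ↦ (n : ℝ) ^ (m / 6 : ℝ) := by
  have hscale : (fun n ↦ (sixthRootScale n : ℝ)) =O[atTop] fun n : ℕ ↦ (n : ℝ) ^ (1 / 6 : ℝ) := by
    refine .of_bound 2 ?_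
    filter_upwards [eventually_ge_atTop 1] with n hn
    have hone : (1 : ℝ) ≤ (n : ℝ) ^ (1 / 6 : ℝ) := Real.one_le_rpow (mod_cast hn) (by norm_num)
    rw [Real.norm_natCast, Real.norm_of_nonneg (by positivity), sixthRootScale, Nat.cast_add_one]
    linarith [Nat.floor_le (zero_le_one.trans hone)]
  refine (hscale.pow m).congr (fun n ↦ (Nat.cast_pow _ _).symm) fun n ↦ ?_
  rw [← Real.rpow_natCast, ← Real.rpow_mul n.cast_nonneg, one_div_mul_eq_div]

theorem isBigO_exceptional_sixthRootScale (k : ℕ) :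
    (fun n ↦ ((2 * k + sixthRootScale n ^ 4 + 2 * sixthRootScale n ^ 5 : ℕ) : ℝ)) =O[atTop]
      fun n : ℕ ↦ (n : ℝ) ^ (5 / 6 : ℝ) := by
  have hpow {c d : ℝ} (hcd : c ≤ d) :
      (fun n : ℕ ↦ (n : ℝ) ^ c) =O[atTop] fun n : ℕ ↦ (n : ℝ) ^ d := by
    refine .of_bound' ?_
    filter_upwards [eventually_ge_atTop 1] with n hn
    rw [Real.norm_of_nonneg (by positivity), Real.norm_of_nonneg (by positivity)]
    exact Real.rpow_le_rpow_of_exponent_le (mod_cast hn) hcd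
  have hconst := (isBigO_sixthRootScale_pow 0).trans (hpow (d := 5 / 6) (by norm_num))
  have hfour := (isBigO_sixthRootScale_pow 4).trans (hpow (d := 5 / 6) (by norm_num))
  have hfive := isBigO_sixthRootScale_pow 5
  push_cast at hconst hfour hfive ⊢
  simpa using ((hconst.const_mul_left (2 * k)).add hfour).add (hfive.const_mul_left 2)

theorem tendsto_log_Sk_div {k : ℕ} (hk : Even k) (hk0 : 0 < k) :
    Tendsto (fun n : ℕ ↦ Real.log (Sk k n) / π n) atTop
      (𝓝 (∑' i : ℕ, 1 / ((i : ℝ) + 1) * Real.log (1 + 1 / ((i : ℝ) + 1)))) := by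
  have hsqrt : Tendsto (fun n : ℕ ↦ n.sqrt * Real.log (n + 1) / π n) atTop (𝓝 0) := by
    refine tendsto_mul_log_div_primeCounting one_half_lt_one (.of_norm_le fun n ↦ ?_)
    rw [Real.norm_natCast, ← Real.sqrt_eq_rpow]
    exact Real.nat_sqrt_le_real_sqrt
  have hscale := tendsto_mul_log_div_primeCounting (by norm_num)
    (isBigO_exceptional_sixthRootScale k)
  refine tendsto_of_tendsto_of_tendsto_of_le_of_le
    (by simpa only [sub_zero] using tendsto_log_primeQuotientProd_div.sub hsqrt)
    (by simpa only [add_zero] using tendsto_log_primeQuotientProd_div.add hscale)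
    (fun n ↦ ?_) fun n ↦ ?_
  · have := log_le_log_add_mul_of_le_mul_pow (primeQuotientProd_pos n)
      (primeQuotientProd_le_Sk_mul hk0 n)
    rw [← sub_div]
    gcongr
    linarith
  · have := log_le_log_add_mul_of_le_mul_pow (Sk_pos hk0 n)
      (Sk_le_of_even hk (lt_sixthRootScale_pow n))
    rw [← add_div]
    gcongr

theorem two_rpow_alpha :
    (2 : ℝ) ^ alpha =
      Real.exp (∑' i : ℕ, 1 / ((i : ℝ) + 1) * Real.log (1 + 1 / ((i : ℝ) + 1))) := by
  have hlog2 : Real.log 2 ≠ 0 := (Real.log_pos one_lt_two).ne'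
  rw [Real.rpow_def_of_pos two_pos, alpha, ← tsum_mul_left]
  congr 2 with i
  rw [Real.logb]
  field_simp

theorem count_mulKSidon_even_general {k : ℕ} (hk : Even k) (hk0 : 0 < k) :
    Tendsto (fun n : ℕ ↦ (Sk k n : ℝ) ^ (1 / (π n : ℝ))) atTop (𝓝 (2 ^ alpha)) := by
  rw [two_rpow_alpha]
  refine ((Real.continuous_exp.tendsto _).comp (tendsto_log_Sk_div hk hk0)).congr fun n ↦ ?_
  rw [Real.rpow_def_of_pos (mod_cast Sk_pos hk0 n), Function.comp_apply, mul_one_div]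

end Count

theorem count_mulKSidon_even :
    ∀ k : ℕ, Even k → 4 ≤ k →
      Filter.Tendsto
        (fun n : ℕ => (Sk k n : ℝ) ^ ((1 : ℝ) / (Nat.primeCounting n : ℝ)))
        Filter.atTop (nhds ((2 : ℝ) ^ alpha)) :=
  fun _ hk hk4 ↦ count_mulKSidon_even_general hk (by omega)
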